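/- arXiv:1205.4821 — 8 statements merged into one kernel-verified Lean document; each statement's English description precedes it below -/
import Mathlib

section
/- The middle-thirds Cantor set satisfies 𝒞 + 𝒞 = [0,2]; that is, every real number in the interval [0,2] can be written as the sum of two elements of 𝒞 (equivalently, (1/2)𝒞 + (1/2)𝒞 = [0,1]). -/
open scoped Pointwise

/-- The middle-thirds Cantor set: reals admitting a ternary expansion
`∑_{n≥1} aₙ 3⁻ⁿ` with every digit `aₙ ∈ {0, 2}`. -/
def ternaryCantorSet : Set ℝ :=
  {x | ∃ a : ℕ → ℝ, (∀ n, a n = 0 ∨ a n = 2) ∧ x = ∑' n : ℕ, a n / 3 ^ (n + 1)}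

/-!
The ternary digits of `x / 2 ∈ [0, 1]` double to digits in `{0, 2, 4}`, each of which is a sum of
two digits in `{0, 2}`: `0 = 0 + 0`, `2 = 2 + 0`, `4 = 2 + 2`. Splitting every digit this way writes
`x` as a sum of two elements of the Cantor set, with no carries to handle.
-/

theorem ofDigits_eq_tsum_div {b : ℕ} (d : ℕ → Fin b) :
    Real.ofDigits d = ∑' n, (d n : ℝ) / (b : ℝ) ^ (n + 1) := by
  simp only [Real.ofDigits, Real.ofDigitsTerm, div_eq_mul_inv]

theorem ofDigits_add_ofDigits_eq_mul_ofDigits {b : ℕ} {c d e : ℕ → Fin b} {k : ℝ}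
    (h : ∀ n, (c n : ℝ) + d n = k * e n) :
    Real.ofDigits c + Real.ofDigits d = k * Real.ofDigits e := by
  simp only [Real.ofDigits]
  rw [← Real.summable_ofDigitsTerm.tsum_add Real.summable_ofDigitsTerm, ← tsum_mul_left]
  refine tsum_congr fun n ↦ ?_
  simp only [Real.ofDigitsTerm]
  rw [← add_mul, h, mul_assoc]

theorem exists_fin_three_ne_one_and_coe_eq_iff {y : ℝ} :
    (∃ i : Fin 3, i ≠ 1 ∧ (i : ℝ) = y) ↔ y = 0 ∨ y = 2 := by
  simp [Fin.exists_fin_succ, eq_comm, one_add_one_eq_two]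

theorem ternaryCantorSet_eq_cantorSet : ternaryCantorSet = cantorSet := by
  rw [cantorSet_eq_zero_two_ofDigits]
  ext x
  constructor
  · rintro ⟨a, ha, rfl⟩
    choose d hd_ne_one hd_eq using fun n ↦ exists_fin_three_ne_one_and_coe_eq_iff.mpr (ha n)
    refine ⟨d, hd_ne_one, ?_⟩
    simp only [ofDigits_eq_tsum_div, hd_eq, Nat.cast_ofNat]
  · rintro ⟨d, hd_ne_one, rfl⟩
    refine ⟨fun n ↦ d n, fun n ↦ exists_fin_three_ne_one_and_coe_eq_iff.mp
      ⟨d n, hd_ne_one n, rfl⟩, ?_⟩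
    simp only [ofDigits_eq_tsum_div, Nat.cast_ofNat]

theorem exists_ne_one_add_eq_two_mul (i : Fin 3) :
    ∃ j k : Fin 3, j ≠ 1 ∧ k ≠ 1 ∧ (j : ℕ) + k = 2 * i := by
  decide +revert

theorem two_mul_ofDigits_mem_cantorSet_add_cantorSet (d : ℕ → Fin 3) :
    2 * Real.ofDigits d ∈ cantorSet + cantorSet := by
  choose a b ha hb hab using fun n ↦ exists_ne_one_add_eq_two_mul (d n)
  have hsum : Real.ofDigits a + Real.ofDigits b = 2 * Real.ofDigits d :=
    ofDigits_add_ofDigits_eq_mul_ofDigits fun n ↦ mod_cast hab n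
  rw [← hsum]
  exact Set.add_mem_add (ofDigits_zero_two_sequence_mem_cantorSet ha)
    (ofDigits_zero_two_sequence_mem_cantorSet hb)

theorem cantorSet_add_cantorSet_subset_Icc : cantorSet + cantorSet ⊆ Set.Icc 0 2 :=
  calc cantorSet + cantorSet
    _ ⊆ Set.Icc 0 1 + Set.Icc 0 1 :=
      Set.add_subset_add cantorSet_subset_unitInterval cantorSet_subset_unitInterval
    _ ⊆ Set.Icc (0 + 0) (1 + 1) := Set.Icc_add_Icc_subset 0 1 0 1
    _ = Set.Icc 0 2 := by norm_num

theorem Icc_subset_cantorSet_add_cantorSet : Set.Icc 0 2 ⊆ cantorSet + cantorSet := by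
  rintro x ⟨hx_nonneg, hx_le⟩
  have hx_half : x / 2 ∈ Set.Icc (0 : ℝ) 1 := ⟨by linarith, by linarith⟩
  obtain ⟨d, -, hd⟩ := Real.ofDigits_SurjOn (b := 3) (by norm_num) hx_half
  have hx : x = 2 * Real.ofDigits d := by linarith
  exact hx ▸ two_mul_ofDigits_mem_cantorSet_add_cantorSet d

/-- The middle-thirds Cantor set satisfies `𝒞 + 𝒞 = [0, 2]`. -/
theorem ternaryCantorSet_add_ternaryCantorSet : ternaryCantorSet + ternaryCantorSet = Set.Icc (0 : ℝ) 2 := by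
  rw [ternaryCantorSet_eq_cantorSet]
  exact cantorSet_add_cantorSet_subset_Icc.antisymm Icc_subset_cantorSet_add_cantorSet
end

section
/- (Lorentz's Lemma) There exists a constant c > 0 such that for every positive integer k the following holds: if A is a set of integers contained in [0, k) and ℓ is an integer with |A| ≥ ℓ ≥ 2, then there exists a set of integers B contained in the open interval (−k, k) such that every integer in [0, k) belongs to the sumset A + B, and |B| ≤ c · k · (log ℓ)/ℓ. -/
/-!
Choose `B` greedily among the elements of `-A + X`. Each `x ∈ X` lies in exactly `|A|` of the
translates `A + b` with `b ∈ -A + X`, so by averaging some translate contains a proportion at least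
`δ = |A| / |-A + X|` of the points of `X` not covered so far, and after `m` greedy choices at most
`|X| exp (-δ m)` points remain. Stopping at `m ≈ δ⁻¹ log |A|` leaves at most `|X| / |A|` points,
which are covered by one translate each.
-/

open Finset Real
open scoped Pointwise

section GreedyCovering

variable {α β : Type*} {r : α → β → Prop} [∀ x b, Decidable (r x b)]
  {X : Finset α} {T B : Finset β} {d : ℕ}

lemma exists_card_mul_le_card_mul_card_bipartiteBelow (hT : T.Nonempty)
    (hd : ∀ x ∈ X, d ≤ #(T.bipartiteAbove r x)) :
    ∃ b ∈ T, #X * d ≤ #T * #(X.bipartiteBelow r b) := by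
  obtain ⟨b, hb, hmax⟩ := T.exists_max_image (fun b => #(X.bipartiteBelow r b)) hT
  exact ⟨b, hb, card_mul_le_card_mul r hd hmax⟩

/-- The points of `X` left over by a partial cover: those related to no member of `B`, where
`r x b` means that the set indexed by `b` contains `x`. -/
def uncovered (r : α → β → Prop) [∀ x b, Decidable (r x b)] (X : Finset α) (B : Finset β) :
    Finset α :=
  {x ∈ X | ∀ b ∈ B, ¬ r x b}

lemma uncovered_subset : uncovered r X B ⊆ X :=
  filter_subset _ _

lemma exists_rel_of_notMem_uncovered {x : α} (hx : x ∈ X) (hxB : x ∉ uncovered r X B) :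
    ∃ b ∈ B, r x b := by
  simpa [uncovered, hx] using hxB

lemma card_bipartiteBelow_add_card_uncovered_insert [DecidableEq β] (b : β) :
    #((uncovered r X B).bipartiteBelow r b) + #(uncovered r X (insert b B)) =
      #(uncovered r X B) := by
  have uncovered_insert :
      uncovered r X (insert b B) = {x ∈ uncovered r X B | ¬ r x b} := by
    ext x
    simp only [uncovered, mem_filter, forall_mem_insert]
    tauto
  rw [uncovered_insert]
  exact card_filter_add_card_filter_not _

lemma exists_card_uncovered_insert_le [DecidableEq β] (hT : T.Nonempty)
    (hd : ∀ x ∈ X, d ≤ #(T.bipartiteAbove r x)) (B : Finset β) :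
    ∃ b ∈ T, (#(uncovered r X (insert b B)) : ℝ) ≤ (1 - d / #T) * #(uncovered r X B) := by
  obtain ⟨b, hb, hcard⟩ := exists_card_mul_le_card_mul_card_bipartiteBelow (X := uncovered r X B)
    hT fun x hx => hd x (uncovered_subset hx)
  refine ⟨b, hb, ?_⟩
  have hsplit : (#((uncovered r X B).bipartiteBelow r b) : ℝ) + #(uncovered r X (insert b B)) =
      #(uncovered r X B) :=
    mod_cast card_bipartiteBelow_add_card_uncovered_insert b
  have hnew : (d / #T : ℝ) * #(uncovered r X B) ≤ #((uncovered r X B).bipartiteBelow r b) := by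
    have hT_pos : (0 : ℝ) < #T := mod_cast hT.card_pos
    rw [div_mul_eq_mul_div, div_le_iff₀' hT_pos, mul_comm]
    exact mod_cast hcard
  linarith

lemma exists_card_uncovered_le_mul_exp (hT : T.Nonempty)
    (hd : ∀ x ∈ X, d ≤ #(T.bipartiteAbove r x)) (m : ℕ) :
    ∃ B ⊆ T, #B ≤ m ∧ (#(uncovered r X B) : ℝ) ≤ #X * exp (-(m * (d / #T))) := by
  classical
  induction m with
  | zero => exact ⟨∅, empty_subset T, by simp, by simpa using card_le_card uncovered_subset⟩
  | succ m ih =>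
    obtain ⟨B, hBT, hBm, hB⟩ := ih
    obtain ⟨b, hbT, hb⟩ := exists_card_uncovered_insert_le hT hd B
    refine ⟨insert b B, insert_subset hbT hBT, (card_insert_le b B).trans (by lia), ?_⟩
    calc (#(uncovered r X (insert b B)) : ℝ)
        ≤ (1 - d / #T) * #(uncovered r X B) := hb
      _ ≤ exp (-(d / #T)) * (#X * exp (-(m * (d / #T)))) := by
          gcongr
          exact one_sub_le_exp_neg _
      _ = #X * exp (-((m + 1 : ℕ) * (d / #T))) := by
          rw [mul_left_comm, ← exp_add]
          push_cast
          ring_nf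

lemma exists_cover_card_le_add_card_uncovered (hX : ∀ x ∈ X, ∃ b ∈ T, r x b) (hBT : B ⊆ T) :
    ∃ C ⊆ T, (∀ x ∈ X, ∃ b ∈ C, r x b) ∧ #C ≤ #B + #(uncovered r X B) := by
  classical
  choose f hfT hf using hX
  let fill (x : uncovered r X B) : β := f x (uncovered_subset x.2)
  refine ⟨B ∪ univ.image fill, union_subset hBT ?_, fun x hx => ?_, ?_⟩
  · exact image_subset_iff.2 fun x _ => hfT x (uncovered_subset x.2)
  · by_cases hxB : x ∈ uncovered r X B
    · exact ⟨fill ⟨x, hxB⟩, mem_union_right _ (mem_image_of_mem fill (mem_univ _)), hf x hx⟩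
    · obtain ⟨b, hb, hxb⟩ := exists_rel_of_notMem_uncovered hx hxB
      exact ⟨b, mem_union_left _ hb, hxb⟩
  · calc #(B ∪ univ.image fill) ≤ #B + #(univ.image fill) := card_union_le _ _
      _ ≤ #B + #(uncovered r X B) := by
          gcongr
          exact card_image_le.trans_eq (Fintype.card_coe _)

lemma exists_cover_card_le_log (hd_pos : 0 < d) (hd : ∀ x ∈ X, d ≤ #(T.bipartiteAbove r x)) :
    ∃ C ⊆ T, (∀ x ∈ X, ∃ b ∈ C, r x b) ∧
      (#C : ℝ) ≤ ⌈#T * (log d / d)⌉₊ + (#X : ℝ) / d := by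
  obtain rfl | ⟨x₀, hx₀⟩ := X.eq_empty_or_nonempty
  · exact ⟨∅, empty_subset T, by simp, by simp⟩
  have hX : ∀ x ∈ X, ∃ b ∈ T, r x b := fun x hx => by
    obtain ⟨b, hb⟩ := card_pos.1 (hd_pos.trans_le (hd x hx))
    exact ⟨b, (mem_bipartiteAbove r).1 hb⟩
  have hT : T.Nonempty := (hX x₀ hx₀).imp fun _ => And.left
  have hT_pos : (0 : ℝ) < #T := mod_cast hT.card_pos
  have hd_pos' : (0 : ℝ) < d := mod_cast hd_pos
  set m := ⌈#T * (log d / d)⌉₊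
  obtain ⟨B, hBT, hBm, hB⟩ := exists_card_uncovered_le_mul_exp hT hd m
  obtain ⟨C, hCT, hXC, hC⟩ := exists_cover_card_le_add_card_uncovered hX hBT
  have log_le : log d ≤ m * (d / #T) :=
    calc log d = #T * (log d / d) * (d / #T) := by field_simp [hT_pos.ne']
      _ ≤ m * (d / #T) := by gcongr; exact Nat.le_ceil _
  refine ⟨C, hCT, hXC, ?_⟩
  calc (#C : ℝ) ≤ #B + #(uncovered r X B) := mod_cast hC
    _ ≤ m + #X * exp (-log d) := by
        gcongr
        exact hB.trans (by gcongr)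
    _ = m + (#X : ℝ) / d := by rw [exp_neg, exp_log hd_pos', div_eq_mul_inv]

end GreedyCovering

section Translates

variable {G : Type*} [AddGroup G] [DecidableEq G]

lemma card_le_card_filter_sub_mem (A : Finset G) {X : Finset G} {x : G} (hx : x ∈ X) :
    #A ≤ #{b ∈ -A + X | x - b ∈ A} := by
  refine card_le_card_of_injOn (fun a => -a + x) (fun a ha => ?_) fun a _ a' _ h => by simpa using h
  have ha : a ∈ A := ha
  simp [ha, sub_eq_add_neg, add_mem_add (neg_mem_neg ha) hx]

lemma exists_subset_add_card_le_log {A : Finset G} (hA : A.Nonempty) (X : Finset G) :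
    ∃ B ⊆ -A + X, X ⊆ A + B ∧
      (#B : ℝ) ≤ ⌈#(-A + X) * (log #A / #A)⌉₊ + (#X : ℝ) / #A := by
  obtain ⟨B, hB, hXB, hcard⟩ := exists_cover_card_le_log (r := fun x b => x - b ∈ A) hA.card_pos
    fun x hx => card_le_card_filter_sub_mem A hx
  refine ⟨B, hB, fun x hx => ?_, hcard⟩
  obtain ⟨b, hb, hxb⟩ := hXB x hx
  exact mem_add.2 ⟨x - b, hxb, b, hb, sub_add_cancel x b⟩

lemma ceil_mul_log_div_add_div_le {ℓ N M : ℕ} (hℓ : 2 ≤ ℓ) (hℓN : ℓ ≤ N) (hMN : M ≤ N) :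
    ⌈N * (log ℓ / ℓ)⌉₊ + (M : ℝ) / ℓ ≤ 4 * N * (log ℓ / ℓ) := by
  have hℓ_pos : (0 : ℝ) < ℓ := by positivity
  have two_le : 2 ≤ 3 * log ℓ := by
    have : log 2 ≤ log ℓ := log_le_log two_pos (mod_cast hℓ)
    linarith [log_two_gt_d9]
  have one_le : 1 ≤ (N : ℝ) / ℓ := (one_le_div hℓ_pos).2 (mod_cast hℓN)
  have ceil_le : (⌈N * (log ℓ / ℓ)⌉₊ : ℝ) ≤ N * (log ℓ / ℓ) + 1 :=
    (Nat.ceil_lt_add_one (by positivity)).le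
  calc (⌈N * (log ℓ / ℓ)⌉₊ : ℝ) + M / ℓ
      ≤ N * (log ℓ / ℓ) + N / ℓ + N / ℓ := by
        gcongr
        linarith
    _ = N * (log ℓ / ℓ) + N / ℓ * 2 := by ring
    _ ≤ N * (log ℓ / ℓ) + N / ℓ * (3 * log ℓ) := by gcongr
    _ = 4 * N * (log ℓ / ℓ) := by ring

theorem lorentz_lemma_general (A X : Finset G) {ℓ : ℕ} (hℓ : 2 ≤ ℓ) (hℓA : ℓ ≤ #A) :
    ∃ B ⊆ -A + X, X ⊆ A + B ∧ (#B : ℝ) ≤ 4 * #(-A + X) * (log ℓ / ℓ) := by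
  obtain rfl | hX := X.eq_empty_or_nonempty
  · exact ⟨∅, by simp⟩
  -- `log ℓ / ℓ` is not monotone in `ℓ`, so `A` is first shrunk to have exactly `ℓ` elements.
  obtain ⟨A', hA'A, rfl⟩ := exists_subset_card_eq hℓA
  have hA' : A'.Nonempty := card_pos.1 (two_pos.trans_le hℓ)
  obtain ⟨B, hB, hXB, hcard⟩ := exists_subset_add_card_le_log hA' X
  have hsub : -A' + X ⊆ -A + X := add_subset_add_right (neg_subset_neg hA'A)
  refine ⟨B, hB.trans hsub, hXB.trans (add_subset_add_right hA'A), ?_⟩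
  calc (#B : ℝ) ≤ 4 * #(-A' + X) * (log #A' / #A') :=
        hcard.trans <| ceil_mul_log_div_add_div_le hℓ
          (by simpa using card_le_card_add_right (s := -A') hX)
          (card_le_card_add_left hA'.neg)
    _ ≤ 4 * #(-A + X) * (log #A' / #A') := by gcongr

end Translates

lemma neg_add_Ico_subset_Ioo {A : Finset ℤ} {k : ℤ} (hA : ∀ a ∈ A, 0 ≤ a ∧ a < k) :
    -A + Ico 0 k ⊆ Ioo (-k) k := by
  intro b hb
  obtain ⟨a', ha', x, hx, rfl⟩ := mem_add.1 hb
  have := hA (-a') (mem_neg'.1 ha')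
  rw [mem_Ico] at hx
  rw [mem_Ioo]
  lia

/-- **Lorentz's Lemma.** There is a constant `c > 0` such that for every positive
integer `k`: if `A` is a set of integers contained in `[0, k)` with `|A| ≥ ℓ ≥ 2`,
then there is a set of integers `B ⊆ (-k, k)` with `[0, k) ⊆ A + B` and
`|B| ≤ c · k · (log ℓ) / ℓ`. -/
theorem lorentz_lemma :
    ∃ c : ℝ, 0 < c ∧ ∀ k : ℕ, 0 < k → ∀ A : Finset ℤ,
      (∀ a ∈ A, 0 ≤ a ∧ a < (k : ℤ)) → ∀ ℓ : ℕ, 2 ≤ ℓ → (ℓ : ℕ) ≤ A.card →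
        ∃ B : Finset ℤ,
          (∀ b ∈ B, -(k : ℤ) < b ∧ b < (k : ℤ)) ∧
          (∀ i : ℤ, 0 ≤ i → i < (k : ℤ) → ∃ a ∈ A, ∃ b ∈ B, i = a + b) ∧
          (B.card : ℝ) ≤ c * k * (Real.log ℓ / ℓ) := by
  refine ⟨8, by norm_num, fun k _ A hA ℓ hℓ hℓA => ?_⟩
  obtain ⟨B, hB, hcover, hcard⟩ := lorentz_lemma_general A (Ico 0 (k : ℤ)) hℓ hℓA
  have hsub : -A + Ico 0 (k : ℤ) ⊆ Ioo (-k : ℤ) k := neg_add_Ico_subset_Ioo hA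
  refine ⟨B, fun b hb => mem_Ioo.1 (hsub (hB hb)), fun i hi hik => ?_, ?_⟩
  · obtain ⟨a, ha, b, hb, rfl⟩ := mem_add.1 (hcover (mem_Ico.2 ⟨hi, hik⟩))
    exact ⟨a, ha, b, hb, rfl⟩
  · have htranslates : #(-A + Ico 0 (k : ℤ)) ≤ 2 * k :=
      (card_le_card hsub).trans (by rw [Int.card_Ioo]; lia)
    calc (#B : ℝ) ≤ 4 * #(-A + Ico 0 (k : ℤ)) * (log ℓ / ℓ) := hcard
      _ ≤ 4 * (2 * k : ℕ) * (log ℓ / ℓ) := by gcongr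
      _ = 8 * k * (log ℓ / ℓ) := by push_cast; ring
end

section
/- There exists a constant c > 0 such that for every positive integer k there is a finite set of integers B_k ⊆ (−3ᵏ, 3ᵏ) with the following properties: every integer i with 0 ≤ i < 3ᵏ can be written as i = a + b with a ∈ C_k and b ∈ B_k, and |B_k| ≤ c · k · (3/2)ᵏ. -/
/-- `Ck k` is the set of integers `∑_{j<k} δⱼ 3^j` with each `δⱼ ∈ {0,1}`,
i.e. the integers in `[0, 3^k)` all of whose ternary digits are 0 or 1. -/
def Ck (k : ℕ) : Set ℤ :=
  {i | ∃ δ : ℕ → ℤ, (∀ j, δ j = 0 ∨ δ j = 1) ∧ i = ∑ j ∈ Finset.range k, δ j * 3 ^ j}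

/-!
Choose the translates of `C_k` greedily. Each point of `[0, 3ᵏ)` lies in `b + C_k` for `2ᵏ` of the
fewer than `2 · 3ᵏ` shifts `b ∈ (-3ᵏ, 3ᵏ)`, so on average, hence for some `b`, a translate catches
the proportion `p = 2ᵏ / (2 · 3ᵏ)` of the points that are still uncovered. After `t` such choices
at most `3ᵏ (1 - p)ᵗ ≤ 3ᵏ exp (-p t)` points remain, and this is less than `1` as soon as
`t > p⁻¹ log 3ᵏ = 2 (3/2)ᵏ k log 3`.
-/

section Covering

open Finset

variable {α β : Type*} (r : α → β → Prop) [∀ x y, Decidable (r x y)] {X : Finset α} {Y : Finset β}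
  {d : ℝ}

lemma exists_card_mul_div_le_card_bipartiteBelow (hY : Y.Nonempty)
    (hd : ∀ x ∈ X, d ≤ #(Y.bipartiteAbove r x)) :
    ∃ y ∈ Y, #X * (d / #Y) ≤ #(X.bipartiteBelow r y) := by
  by_contra! hsmall
  have hlt : #X • d < #Y • (#X * (d / #Y)) :=
    card_nsmul_lt_card_nsmul_of_le_of_lt r hY hd hsmall
  have hY₀ : (#Y : ℝ) ≠ 0 := by exact_mod_cast hY.card_ne_zero
  refine hlt.ne ?_
  simp only [nsmul_eq_mul]
  field_simp

lemma exists_subset_card_le_card_uncovered_le_mul_exp (hY : Y.Nonempty)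
    (hd : ∀ x ∈ X, d ≤ #(Y.bipartiteAbove r x)) (t : ℕ) :
    ∃ B ⊆ Y, #B ≤ t ∧ #{x ∈ X | ∀ b ∈ B, ¬ r x b} ≤ #X * Real.exp (-(d / #Y) * t) := by
  classical
  induction t with
  | zero => exact ⟨∅, by simp⟩
  | succ t ih =>
    obtain ⟨B, hBY, hBcard, hB⟩ := ih
    set U := {x ∈ X | ∀ b ∈ B, ¬ r x b} with hU
    obtain ⟨y, hy, hcaught⟩ := exists_card_mul_div_le_card_bipartiteBelow r hY
      fun x (hx : x ∈ U) ↦ hd x (mem_filter.1 hx).1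
    refine ⟨insert y B, insert_subset hy hBY, (card_insert_le y B).trans (by gcongr), ?_⟩
    have huncovered : {x ∈ X | ∀ b ∈ insert y B, ¬ r x b} = {x ∈ U | ¬ r x y} := by
      simp only [hU, filter_filter, forall_mem_insert, and_comm]
    have hsplit : (#(U.bipartiteBelow r y) : ℝ) + #{x ∈ U | ¬ r x y} = #U :=
      mod_cast card_filter_add_card_filter_not _
    calc
      (#{x ∈ X | ∀ b ∈ insert y B, ¬ r x b} : ℝ) = #{x ∈ U | ¬ r x y} := by rw [huncovered]
      _ ≤ #U * (1 - d / #Y) := by linarith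
      _ ≤ #U * Real.exp (-(d / #Y)) := by gcongr; exact Real.one_sub_le_exp_neg _
      _ ≤ #X * Real.exp (-(d / #Y) * t) * Real.exp (-(d / #Y)) := by gcongr
      _ = #X * Real.exp (-(d / #Y) * ↑(t + 1)) := by
        rw [mul_assoc, ← Real.exp_add]
        push_cast
        ring_nf

theorem exists_cover_card_le_mul_log (hd₀ : 0 < d) (hd : ∀ x ∈ X, d ≤ #(Y.bipartiteAbove r x)) :
    ∃ B ⊆ Y, (∀ x ∈ X, ∃ b ∈ B, r x b) ∧ #B ≤ #Y / d * Real.log #X + 1 := by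
  obtain rfl | ⟨x₀, hx₀⟩ := X.eq_empty_or_nonempty
  · exact ⟨∅, by simp⟩
  have hY : Y.Nonempty := by
    have hpos : 0 < #(Y.bipartiteAbove r x₀) := by exact_mod_cast hd₀.trans_le (hd x₀ hx₀)
    exact (card_pos.1 hpos).mono (filter_subset _ _)
  have hX₀ : (0 : ℝ) < #X := by exact_mod_cast card_pos.2 ⟨x₀, hx₀⟩
  have hY₀ : (0 : ℝ) < #Y := by exact_mod_cast hY.card_pos
  set t := ⌊#Y / d * Real.log #X⌋₊ + 1 with ht
  have htlog : Real.log #X < d / #Y * t := by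
    rw [← inv_mul_lt_iff₀ (div_pos hd₀ hY₀), inv_div]
    exact_mod_cast Nat.lt_floor_add_one _
  obtain ⟨B, hBY, hBcard, hB⟩ := exists_subset_card_le_card_uncovered_le_mul_exp r hY hd t
  have huncovered : (#{x ∈ X | ∀ b ∈ B, ¬ r x b} : ℝ) < 1 := calc
    _ ≤ #X * Real.exp (-(d / #Y) * t) := hB
    _ < #X * Real.exp (-Real.log #X) := by gcongr; linarith
    _ = 1 := by rw [Real.exp_neg, Real.exp_log hX₀, mul_inv_cancel₀ hX₀.ne']
  refine ⟨B, hBY, ?_, ?_⟩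
  · have hempty := card_eq_zero.1 (Nat.cast_lt_one.1 huncovered)
    simpa [filter_eq_empty_iff] using hempty
  · calc
      (#B : ℝ) ≤ t := mod_cast hBcard
      _ ≤ #Y / d * Real.log #X + 1 := by
        rw [ht]
        push_cast
        gcongr
        exact Nat.floor_le (by positivity)

end Covering

section Translates

open Finset
open scoped Pointwise

theorem exists_subset_sub_subset_add_card_le_mul_log {G : Type*} [AddGroup G] [DecidableEq G]
    {A : Finset G} (hA : A.Nonempty) (X : Finset G) :
    ∃ B ⊆ X - A, X ⊆ B + A ∧ #B ≤ (#(X - A) : ℝ) / #A * Real.log #X + 1 := by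
  have hcard : ∀ x ∈ X, (#A : ℝ) ≤ #((X - A).bipartiteAbove (fun x y ↦ -y + x ∈ A) x) := by
    intro x hx
    have hsub : A.image (x - ·) ⊆ (X - A).bipartiteAbove (fun x y ↦ -y + x ∈ A) x := by
      intro y hy
      obtain ⟨a, ha, rfl⟩ := mem_image.1 hy
      exact mem_filter.2 ⟨sub_mem_sub hx ha, by simpa using ha⟩
    rw [← card_image_of_injective A (sub_right_injective (b := x))]
    exact_mod_cast card_le_card hsub
  obtain ⟨B, hBY, hcover, hB⟩ :=
    exists_cover_card_le_mul_log _ (by exact_mod_cast hA.card_pos) hcard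
  refine ⟨B, hBY, fun x hx ↦ ?_, hB⟩
  obtain ⟨b, hb, hbx⟩ := hcover x hx
  exact mem_add.2 ⟨b, hb, -b + x, hbx, add_neg_cancel_left b x⟩

lemma Ico_zero_sub_Ico_zero_subset_Ioo (n : ℤ) : Ico 0 n - Ico 0 n ⊆ Ioo (-n) n := by
  intro y hy
  obtain ⟨x, hx, a, ha, rfl⟩ := mem_sub.1 hy
  rw [mem_Ico] at hx ha
  exact mem_Ioo.2 (by lia)

theorem exists_subset_Ioo_Ico_subset_add_card_le_mul_log {A : Finset ℤ} (hA : A.Nonempty) {n : ℕ}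
    (hAn : A ⊆ Ico 0 (n : ℤ)) :
    ∃ B ⊆ Ioo (-n : ℤ) n, Ico 0 (n : ℤ) ⊆ B + A ∧ #B ≤ 2 * n / #A * Real.log n + 1 := by
  obtain ⟨B, hBsub, hcover, hB⟩ := exists_subset_sub_subset_add_card_le_mul_log hA (Ico 0 (n : ℤ))
  have hshifts : Ico 0 (n : ℤ) - A ⊆ Ioo (-n : ℤ) n :=
    (sub_subset_sub_left hAn).trans (Ico_zero_sub_Ico_zero_subset_Ioo n)
  have hshifts_card : #(Ico 0 (n : ℤ) - A) ≤ 2 * n :=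
    (card_le_card hshifts).trans (by rw [Int.card_Ioo]; lia)
  refine ⟨B, hBsub.trans hshifts, hcover, hB.trans ?_⟩
  rw [Int.card_Ico, sub_zero, Int.toNat_natCast]
  gcongr
  exact_mod_cast hshifts_card

end Translates

section TernaryDigits

open Finset

lemma Ck_eq_coe_image_powerset (k : ℕ) :
    Ck k = ((range k).powerset.image fun s ↦ ((∑ j ∈ s, 3 ^ j : ℕ) : ℤ) : Finset ℤ) := by
  ext i
  rw [mem_coe, mem_image]
  constructor
  · rintro ⟨δ, hδ, rfl⟩
    refine ⟨{j ∈ range k | δ j = 1}, mem_powerset.2 (filter_subset _ _), ?_⟩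
    push_cast
    rw [sum_filter]
    refine sum_congr rfl fun j _ ↦ ?_
    obtain h | h := hδ j <;> simp [h]
  · rintro ⟨s, hs, rfl⟩
    refine ⟨fun j ↦ if j ∈ s then 1 else 0, fun j ↦ (ite_eq_or_eq _ _ _).symm, ?_⟩
    simp [sum_ite_mem, inter_eq_right.2 (mem_powerset.1 hs)]

lemma finite_Ck (k : ℕ) : (Ck k).Finite := by
  rw [Ck_eq_coe_image_powerset]
  exact finite_toSet _

lemma Ck_subset_Ico (k : ℕ) : Ck k ⊆ Set.Ico 0 (3 ^ k) := by
  intro i hi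
  rw [Ck_eq_coe_image_powerset, mem_coe, mem_image] at hi
  obtain ⟨s, hs, rfl⟩ := hi
  have hlt : ∀ j ∈ s, j < k := fun j hj ↦ mem_range.1 (mem_powerset.1 hs hj)
  exact ⟨Nat.cast_nonneg _, mod_cast Nat.geomSum_lt (by norm_num) hlt⟩

lemma ncard_Ck (k : ℕ) : (Ck k).ncard = 2 ^ k := by
  have hinj : Function.Injective fun s : Finset ℕ ↦ ((∑ j ∈ s, 3 ^ j : ℕ) : ℤ) :=
    Nat.cast_injective.comp (geomSum_injective (by norm_num))
  rw [Ck_eq_coe_image_powerset, Set.ncard_coe_finset, card_image_of_injective _ hinj,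
    card_powerset, card_range]

end TernaryDigits

/-- There is a constant `c > 0` such that for every positive integer `k` there is a
finite set of integers `B_k ⊆ (−3^k, 3^k)` with: every integer `0 ≤ i < 3^k` can be
written as `i = a + b` with `a ∈ C_k`, `b ∈ B_k`, and `|B_k| ≤ c · k · (3/2)^k`. -/
theorem complementary_blocks_exist :
    ∃ c : ℝ, 0 < c ∧ ∀ k : ℕ, 0 < k →
      ∃ B : Finset ℤ,
        (∀ b ∈ B, -(3 : ℤ) ^ k < b ∧ b < (3 : ℤ) ^ k) ∧
        (∀ i : ℤ, 0 ≤ i → i < (3 : ℤ) ^ k → ∃ a ∈ Ck k, ∃ b ∈ B, i = a + b) ∧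
        (B.card : ℝ) ≤ c * k * (3 / 2) ^ k := by
  refine ⟨2 * Real.log 3 + 1, by positivity, fun k hk ↦ ?_⟩
  obtain ⟨A, hA⟩ := (finite_Ck k).exists_finset_coe
  have hAcard : A.card = 2 ^ k := by rw [← Set.ncard_coe_finset, hA, ncard_Ck]
  have hAne : A.Nonempty := Finset.card_pos.1 (by rw [hAcard]; positivity)
  have hAsub : A ⊆ Finset.Ico 0 ((3 ^ k : ℕ) : ℤ) := by
    rw [← Finset.coe_subset, hA]
    simpa using Ck_subset_Ico k
  obtain ⟨B, hBsub, hcover, hB⟩ := exists_subset_Ioo_Ico_subset_add_card_le_mul_log hAne hAsub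
  push_cast [hAcard] at hBsub hcover hB
  refine ⟨B, fun b hb ↦ Finset.mem_Ioo.1 (hBsub hb), fun i hi₀ hi ↦ ?_, ?_⟩
  · obtain ⟨b, hb, a, ha, rfl⟩ := Finset.mem_add.1 (hcover (Finset.mem_Ico.2 ⟨hi₀, hi⟩))
    exact ⟨a, hA ▸ ha, b, hb, add_comm b a⟩
  · have hone : (1 : ℝ) ≤ k * (3 / 2) ^ k :=
      one_le_mul_of_one_le_of_one_le (by exact_mod_cast hk) (one_le_pow₀ (by norm_num))
    calc
      (B.card : ℝ) ≤ 2 * 3 ^ k / 2 ^ k * Real.log (3 ^ k) + 1 := hB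
      _ = 2 * Real.log 3 * (k * (3 / 2) ^ k) + 1 := by rw [Real.log_pow, div_pow]; ring
      _ ≤ (2 * Real.log 3 + 1) * k * (3 / 2) ^ k := by linarith
end

section
/- For every ε > 0 there exists a compact set E ⊆ ℝ such that 𝒞 + E ⊇ [0,2] and the Hausdorff dimension of E is at most 1 − log 2/log 3 + ε. -/
open scoped Pointwise

/-!
Group the ternary digits of `𝒞` into blocks of length `m`: in base `N = 3 ^ m`, the set `𝒞` is given
by a set `A ⊆ [0, N)` of `2 ^ m` integer digits. A greedy choice of translates of `A` yields a set
`B` of `O((N / #A) log N)` integers such that `A + B` contains all integers in `[-LN, LN]`. Adding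
expansions digit by digit, `𝒞` plus the set `E` of reals with base-`N` digits in `B` contains
`[-L, L]`, because `[-L, L]` consists of reals with base-`N` digits in `[-LN, LN]`. The set `E` is
self-similar with `#B` pieces of ratio `1 / N`, so its dimension is at most
`log #B / log N = 1 - log 2 / log 3 + o(1)` as `m → ∞`. Nothing here is special to base `3` and the
digits `{0, 2}`.
-/

open Bornology Filter Finset MeasureTheory Topology

section GreedyCovering

variable {α β : Type*} (r : α → β → Prop) [∀ a x, Decidable (r a x)] {S : Finset α} {X : Finset β}
  {p : ℕ}

lemma exists_card_mul_le_card_mul_card_filter (hS : S.Nonempty)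
    (hp : ∀ x ∈ X, p ≤ #{a ∈ S | r a x}) : ∃ a ∈ S, #X * p ≤ #S * #{x ∈ X | r a x} := by
  refine exists_le_of_sum_le hS ?_
  rw [sum_const, smul_eq_mul, ← mul_sum]
  gcongr
  calc #X * p ≤ ∑ x ∈ X, #{a ∈ S | r a x} := by
        simpa only [smul_eq_mul] using card_nsmul_le_sum X _ p hp
    _ = ∑ a ∈ S, #{x ∈ X | r a x} :=
        (sum_card_bipartiteAbove_eq_sum_card_bipartiteBelow r).symm

lemma exists_card_filter_not_le_mul_exp (hS : S.Nonempty)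
    (hp : ∀ x ∈ X, p ≤ #{a ∈ S | r a x}) :
    ∃ a ∈ S, (#{x ∈ X | ¬ r a x} : ℝ) ≤ #X * Real.exp (-(p / #S)) := by
  obtain ⟨a, haS, ha⟩ := exists_card_mul_le_card_mul_card_filter r hS hp
  have hS₀ : (0 : ℝ) < #S := mod_cast hS.card_pos
  have hcovered : (#X * (p / #S) : ℝ) ≤ #{x ∈ X | r a x} := by
    rw [← mul_div_assoc, div_le_iff₀' hS₀]
    exact_mod_cast ha
  have hsplit : (#{x ∈ X | r a x} + #{x ∈ X | ¬ r a x} : ℝ) = #X :=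
    mod_cast card_filter_add_card_filter_not (s := X) (r a)
  refine ⟨a, haS, ?_⟩
  calc (#{x ∈ X | ¬ r a x} : ℝ) ≤ #X * (1 - p / #S) := by linarith
    _ ≤ #X * Real.exp (-(p / #S)) := by gcongr; exact Real.one_sub_le_exp_neg _

lemma exists_card_uncovered_le_mul_exp_pow (hS : S.Nonempty)
    (hp : ∀ x ∈ X, p ≤ #{a ∈ S | r a x}) (k : ℕ) :
    ∃ T ⊆ S, #T ≤ k ∧
      (#{x ∈ X | ∀ a ∈ T, ¬ r a x} : ℝ) ≤ #X * Real.exp (-(p / #S)) ^ k := by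
  classical
  induction k with
  | zero => exact ⟨∅, empty_subset S, by simp, by simp⟩
  | succ k ih =>
    obtain ⟨T, hTS, hTk, hT⟩ := ih
    obtain ⟨a, haS, ha⟩ := exists_card_filter_not_le_mul_exp r hS
      (X := {x ∈ X | ∀ a ∈ T, ¬ r a x}) fun x hx ↦ hp x (mem_filter.1 hx).1
    refine ⟨insert a T, insert_subset haS hTS, (card_insert_le a T).trans (by gcongr), ?_⟩
    have huncovered : {x ∈ X | ∀ c ∈ insert a T, ¬ r c x} =
        {x ∈ {x ∈ X | ∀ c ∈ T, ¬ r c x} | ¬ r a x} := by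
      simp only [filter_filter, forall_mem_insert, and_comm]
    rw [huncovered, pow_succ, ← mul_assoc]
    exact ha.trans (by gcongr)

lemma exists_subset_cover_card_le (hp₀ : 0 < p) (hp : ∀ x ∈ X, p ≤ #{a ∈ S | r a x}) :
    ∃ T ⊆ S, (∀ x ∈ X, ∃ a ∈ T, r a x) ∧ (#T : ℝ) ≤ #S / p * Real.log #X + 1 := by
  obtain rfl | ⟨x₀, hx₀⟩ := X.eq_empty_or_nonempty
  · exact ⟨∅, empty_subset S, by simp, by simp⟩
  have hS : S.Nonempty := (card_pos.1 (hp₀.trans_le (hp x₀ hx₀))).mono (filter_subset _ _)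
  have hS₀ : (0 : ℝ) < #S := mod_cast hS.card_pos
  have hX₀ : (0 : ℝ) < #X := mod_cast card_pos.2 ⟨x₀, hx₀⟩
  have hp₀' : (0 : ℝ) < p := mod_cast hp₀
  set t : ℝ := #S / p * Real.log #X with ht
  have ht₀ : 0 ≤ t := by positivity
  obtain ⟨T, hTS, hTcard, hT⟩ := exists_card_uncovered_le_mul_exp_pow r hS hp (⌊t⌋₊ + 1)
  have hlog : Real.log #X < (⌊t⌋₊ + 1 : ℕ) * (p / #S) := by
    calc Real.log #X = t * (p / #S) := by rw [ht]; field_simp [hS₀.ne', hp₀'.ne']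
      _ < (⌊t⌋₊ + 1 : ℕ) * (p / #S) := by
        gcongr
        exact_mod_cast Nat.lt_floor_add_one t
  have hlt : #X * Real.exp (-(p / #S)) ^ (⌊t⌋₊ + 1) < 1 := by
    rw [← Real.exp_nat_mul, mul_neg, Real.exp_neg, ← div_eq_mul_inv, div_lt_one (Real.exp_pos _)]
    exact (Real.log_lt_iff_lt_exp hX₀).1 hlog
  have hempty := Nat.cast_lt_one.1 (hT.trans_lt hlt)
  rw [card_eq_zero, filter_eq_empty_iff] at hempty
  refine ⟨T, hTS, fun x hx ↦ by simpa using hempty hx, ?_⟩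
  calc (#T : ℝ) ≤ ⌊t⌋₊ + 1 := mod_cast hTcard
    _ ≤ t + 1 := by gcongr; exact Nat.floor_le ht₀

lemma exists_subset_add_card_le {G : Type*} [AddGroup G] [DecidableEq G] {A : Finset G}
    (hA : A.Nonempty) (U : Finset G) :
    ∃ B : Finset G, U ⊆ A + B ∧ (#B : ℝ) ≤ #(-A + U) / #A * Real.log #U + 1 := by
  have hcount (u : G) (hu : u ∈ U) : #A ≤ #{t ∈ -A + U | u - t ∈ A} := by
    refine card_le_card_of_injOn (fun a ↦ -a + u) (fun a ha ↦ ?_) (by simp [Set.InjOn])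
    simpa using ⟨add_mem_add (neg_mem_neg ha) hu, ha⟩
  obtain ⟨B, -, hcover, hB⟩ :=
    exists_subset_cover_card_le (fun t u ↦ u - t ∈ A) hA.card_pos hcount
  refine ⟨B, fun u hu ↦ ?_, hB⟩
  obtain ⟨t, htB, ht⟩ := hcover u hu
  exact mem_add.2 ⟨u - t, ht, t, htB, sub_add_cancel u t⟩

end GreedyCovering

section BlockDigits

/-- The elements `∑_{i < m} dᵢ bⁱ` with digits `dᵢ ∈ D`: these are the digits that serve in base
`b ^ m` once the base-`b` digits, all in `D`, are grouped into blocks of length `m`. -/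
def blockDigits {R : Type*} [Semiring R] [DecidableEq R] (b : R) (D : Finset R) : ℕ → Finset R
  | 0 => {0}
  | m + 1 => image₂ (fun a d ↦ b * a + d) (blockDigits b D m) D

variable {R S : Type*} [Semiring R] [DecidableEq R] [Semiring S] [DecidableEq S]

lemma blockDigits_nonempty (b : R) {D : Finset R} (hD : D.Nonempty) (m : ℕ) :
    (blockDigits b D m).Nonempty := by
  induction m with
  | zero => exact singleton_nonempty 0
  | succ m ih => exact ih.image₂ hD

lemma card_blockDigits_le (b : R) (D : Finset R) (m : ℕ) : #(blockDigits b D m) ≤ #D ^ m := by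
  induction m with
  | zero => simp [blockDigits]
  | succ m ih =>
    calc #(blockDigits b D (m + 1)) ≤ #(blockDigits b D m) * #D := card_image₂_le _ _ _
      _ ≤ #D ^ m * #D := by gcongr
      _ = #D ^ (m + 1) := (pow_succ _ _).symm

lemma image_blockDigits (f : R →+* S) (b : R) (D : Finset R) (m : ℕ) :
    (blockDigits b D m).image f = blockDigits (f b) (D.image f) m := by
  induction m with
  | zero => simp [blockDigits]
  | succ m ih =>
    rw [blockDigits, blockDigits, ← ih]
    exact image_image₂_distrib fun a d ↦ by simp only [map_add, map_mul]

lemma blockDigits_subset_Ico {b : ℤ} {D : Finset ℤ} (hD : D ⊆ Ico 0 b) (m : ℕ) :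
    blockDigits b D m ⊆ Ico 0 (b ^ m) := by
  induction m with
  | zero => simp [blockDigits]
  | succ m ih =>
    refine image₂_subset_iff.2 fun a ha d hd ↦ ?_
    have ha' := mem_Ico.1 (ih ha)
    have hd' := mem_Ico.1 (hD hd)
    rw [mem_Ico, pow_succ]
    constructor <;> nlinarith

lemma card_blockDigits_of_subset_Ico {b : ℤ} {D : Finset ℤ} (hD : D ⊆ Ico 0 b) (m : ℕ) :
    #(blockDigits b D m) = #D ^ m := by
  induction m with
  | zero => simp [blockDigits]
  | succ m ih =>
    rw [blockDigits, pow_succ, ← ih, card_image₂_iff]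
    rintro ⟨x, d⟩ ⟨-, hd⟩ ⟨y, e⟩ ⟨-, he⟩ hxy
    obtain ⟨hd₀, hdb⟩ := mem_Ico.1 (hD hd)
    obtain ⟨he₀, heb⟩ := mem_Ico.1 (hD he)
    have hde : d = e := by
      simpa [Int.emod_eq_of_lt, hd₀, hdb, he₀, heb] using congrArg (· % b) hxy
    have hb : b ≠ 0 := (hd₀.trans_lt hdb).ne'
    simpa [hde, hb] using hxy

end BlockDigits

section DigitSet

/-- The set of reals with an expansion `∑_{n ≥ 1} dₙ b⁻ⁿ` in base `b` whose digits all lie in `D`;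
the digit sequences are indexed from `0`. -/
def digitSet (b : ℝ) (D : Set ℝ) : Set ℝ :=
  {x | ∃ d : ℕ → ℝ, (∀ n, d n ∈ D) ∧ x = ∑' n, d n / b ^ (n + 1)}

lemma ternaryCantorSet_eq_digitSet : ternaryCantorSet = digitSet 3 {0, 2} := rfl

variable {b : ℝ} {D D' K : Set ℝ}

lemma digitSet_mono (h : D ⊆ D') : digitSet b D ⊆ digitSet b D' := by
  rintro x ⟨d, hd, rfl⟩
  exact ⟨d, fun n ↦ h (hd n), rfl⟩

lemma digitSet_nonempty (b : ℝ) (hD : D.Nonempty) : (digitSet b D).Nonempty := by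
  obtain ⟨d, hd⟩ := hD
  exact ⟨_, fun _ ↦ d, fun _ ↦ hd, rfl⟩

lemma summable_const_div_pow_succ (hb : 1 < b) (C : ℝ) : Summable fun n : ℕ ↦ C / b ^ (n + 1) := by
  have hgeom := summable_geometric_of_lt_one (inv_nonneg.2 (zero_le_one.trans hb.le))
    (inv_lt_one_of_one_lt₀ hb)
  simpa only [div_eq_mul_inv, inv_pow] using ((summable_nat_add_iff 1).2 hgeom).mul_left C

lemma norm_div_pow_le {x C : ℝ} (hb : 1 < b) (hx : ‖x‖ ≤ C) (n : ℕ) : ‖x / b ^ n‖ ≤ C / b ^ n := by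
  have hbn : 0 < b ^ n := pow_pos (zero_lt_one.trans hb) n
  rw [norm_div, Real.norm_of_nonneg hbn.le]
  gcongr

lemma summable_digit_div_pow_succ (hb : 1 < b) (hD : IsBounded D) {d : ℕ → ℝ} (hd : ∀ n, d n ∈ D) :
    Summable fun n ↦ d n / b ^ (n + 1) := by
  obtain ⟨C, hC⟩ := hD.exists_norm_le
  exact (summable_const_div_pow_succ hb C).of_norm_bounded
    fun n ↦ norm_div_pow_le hb (hC _ (hd n)) _

lemma isCompact_digitSet (hb : 1 < b) (hD : IsCompact D) : IsCompact (digitSet b D) := by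
  obtain ⟨C, hC⟩ := hD.isBounded.exists_norm_le
  have hcont : ContinuousOn (fun d : ℕ → ℝ ↦ ∑' n, d n / b ^ (n + 1)) (Set.univ.pi fun _ ↦ D) :=
    continuousOn_tsum (fun n ↦ by fun_prop) (summable_const_div_pow_succ hb C)
      fun n d hd ↦ norm_div_pow_le hb (hC _ (hd n trivial)) _
  convert (isCompact_univ_pi fun _ ↦ hD).image_of_continuousOn hcont using 1
  ext x
  simp [digitSet, eq_comm]

lemma digitSet_add_subset (hb : 1 < b) (hD : IsBounded D) (hD' : IsBounded D') :
    digitSet b (D + D') ⊆ digitSet b D + digitSet b D' := by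
  rintro _ ⟨s, hs, rfl⟩
  choose d hd d' hd' hsum using fun n ↦ Set.mem_add.1 (hs n)
  refine Set.mem_add.2 ⟨_, ⟨d, hd, rfl⟩, _, ⟨d', hd', rfl⟩, ?_⟩
  rw [← (summable_digit_div_pow_succ hb hD hd).tsum_add (summable_digit_div_pow_succ hb hD' hd')]
  simp only [← add_div, hsum]

lemma digitSet_eq_inv_smul_add (hb : 1 < b) (hD : IsBounded D) :
    digitSet b D = b⁻¹ • (D + digitSet b D) := by
  have hshift {d : ℕ → ℝ} (hd : ∀ n, d n ∈ D) :
      ∑' n, d n / b ^ (n + 1) = b⁻¹ * (d 0 + ∑' n, d (n + 1) / b ^ (n + 1)) := by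
    rw [(summable_digit_div_pow_succ hb hD hd).tsum_eq_zero_add, mul_add, ← tsum_mul_left]
    congr 1
    · ring
    · exact tsum_congr fun n ↦ by ring
  ext x
  simp only [Set.mem_smul_set, Set.mem_add, smul_eq_mul]
  constructor
  · rintro ⟨d, hd, rfl⟩
    exact ⟨_, ⟨d 0, hd 0, _, ⟨fun n ↦ d (n + 1), fun n ↦ hd (n + 1), rfl⟩, rfl⟩, (hshift hd).symm⟩
  · rintro ⟨_, ⟨e, he, _, ⟨d, hd, rfl⟩, rfl⟩, rfl⟩
    let d' : ℕ → ℝ := fun n ↦ n.casesOn e d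
    have hd' : ∀ n, d' n ∈ D := by rintro (_ | n); exacts [he, hd n]
    exact ⟨d', hd', (hshift hd').symm⟩

lemma tendsto_sum_digit_add_div_pow (hb : 1 < b) (hD : IsBounded D) {d : ℕ → ℝ} (hd : ∀ n, d n ∈ D)
    {y : ℕ → ℝ} (hK : IsBounded K) (hy : ∀ n, y n ∈ K) :
    Tendsto (fun n ↦ ∑ i ∈ range n, d i / b ^ (i + 1) + y n / b ^ n) atTop
      (𝓝 (∑' n, d n / b ^ (n + 1))) := by
  obtain ⟨C, hC⟩ := hK.exists_norm_le
  have hgeom : Tendsto (fun n ↦ C / b ^ n) atTop (𝓝 0) :=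
    tendsto_const_nhds.div_atTop (tendsto_pow_atTop_atTop_of_one_lt hb)
  have hremainder : Tendsto (fun n ↦ y n / b ^ n) atTop (𝓝 0) :=
    squeeze_zero_norm (fun n ↦ norm_div_pow_le hb (hC _ (hy n)) n) hgeom
  simpa using (summable_digit_div_pow_succ hb hD hd).hasSum.tendsto_sum_nat.add hremainder

lemma digitSet_subset_of_inv_smul_add_subset (hb : 1 < b) (hD : IsBounded D) (hK : IsClosed K)
    (hne : K.Nonempty) (hDK : b⁻¹ • (D + K) ⊆ K) : digitSet b D ⊆ K := by
  rintro _ ⟨d, hd, rfl⟩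
  have hmem (n : ℕ) : ∀ z ∈ K, ∑ i ∈ range n, d i / b ^ (i + 1) + z / b ^ n ∈ K := by
    induction n with
    | zero => simp
    | succ n ih =>
      intro z hz
      convert ih _ (hDK (Set.smul_mem_smul_set (Set.add_mem_add (hd n) hz))) using 1
      rw [sum_range_succ, smul_eq_mul]
      ring
  obtain ⟨z, hz⟩ := hne
  exact hK.mem_of_tendsto
    (tendsto_sum_digit_add_div_pow hb hD hd isBounded_singleton fun _ ↦ Set.mem_singleton z)
    (Eventually.of_forall fun n ↦ hmem n z hz)

lemma subset_digitSet_of_subset_inv_smul_add (hb : 1 < b) (hD : IsBounded D) (hK : IsBounded K)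
    (hKD : K ⊆ b⁻¹ • (D + K)) : K ⊆ digitSet b D := by
  have hstep (x : K) : ∃ d ∈ D, ∃ y : K, (x : ℝ) = b⁻¹ * (d + y) := by
    obtain ⟨_, ⟨d, hd, y, hy, rfl⟩, hx⟩ := hKD x.2
    exact ⟨d, hd, ⟨y, hy⟩, hx.symm⟩
  choose digit hdigit next hnext using hstep
  intro x hx
  let y : ℕ → K := fun n ↦ next^[n] ⟨x, hx⟩
  have hexpand (n : ℕ) : ∑ i ∈ range n, digit (y i) / b ^ (i + 1) + y n / b ^ n = x := by
    induction n with
    | zero => simp [y]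
    | succ n ih =>
      have hy : y (n + 1) = next (y n) := Function.iterate_succ_apply' next n _
      rw [sum_range_succ, hy, ← ih, add_assoc, hnext (y n)]
      ring
  have hlim := tendsto_sum_digit_add_div_pow hb hD (fun n ↦ hdigit (y n)) hK (fun n ↦ (y n).2)
  simp only [hexpand] at hlim
  exact ⟨fun n ↦ digit (y n), fun n ↦ hdigit _, tendsto_nhds_unique tendsto_const_nhds hlim⟩

end DigitSet

section SelfSimilarity

variable {b : ℝ} {D : Finset ℝ}

lemma digitSet_eq_inv_pow_smul_blockDigits_add (hb : 1 < b) (D : Finset ℝ) (m : ℕ) :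
    digitSet b D = (b ^ m)⁻¹ • ((blockDigits b D m : Set ℝ) + digitSet b D) := by
  have hb₀ : b ≠ 0 := (zero_lt_one.trans hb).ne'
  induction m with
  | zero => simp [blockDigits]
  | succ m ih =>
    have hcarry : b • (blockDigits b D m : Set ℝ) + D = blockDigits b D (m + 1) := by
      simp only [blockDigits, coe_image₂, ← Set.image_smul, ← Set.image2_add, Set.image2_image_left,
        smul_eq_mul]
    conv_lhs => rw [ih, digitSet_eq_inv_smul_add hb D.finite_toSet.isBounded]
    rw [← hcarry, pow_succ', mul_inv_rev, mul_smul, add_assoc, smul_add b⁻¹,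
      smul_add b⁻¹, inv_smul_smul₀ hb₀, smul_add b⁻¹]

lemma digitSet_pow_blockDigits_subset (hb : 1 < b) (hD : D.Nonempty) {m : ℕ} (hm : m ≠ 0) :
    digitSet (b ^ m) (blockDigits b D m) ⊆ digitSet b D :=
  digitSet_subset_of_inv_smul_add_subset (one_lt_pow₀ hb hm) (finite_toSet _).isBounded
    (isCompact_digitSet hb D.finite_toSet.isCompact).isClosed (digitSet_nonempty b hD)
    (digitSet_eq_inv_pow_smul_blockDigits_add hb D m).ge

lemma digitSet_pow_intCast_blockDigits_subset {b : ℕ} (hb : 1 < b) {D : Finset ℤ}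
    (hD : D.Nonempty) {m : ℕ} (hm : m ≠ 0) :
    digitSet (b ^ m) (Int.cast '' (blockDigits (b : ℤ) D m : Set ℤ)) ⊆
      digitSet b (Int.cast '' (D : Set ℤ)) := by
  have hblocks := image_blockDigits (Int.castRingHom ℝ) b D m
  simp only [Int.coe_castRingHom, Int.cast_natCast] at hblocks
  rw [← coe_image, ← coe_image, hblocks]
  exact digitSet_pow_blockDigits_subset (mod_cast hb) (hD.image _) hm

open scoped ENNReal

lemma digitSet_subset_iUnion_inv_pow_smul_vadd (hb : 1 < b) (D : Finset ℝ) (n : ℕ) :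
    digitSet b D ⊆ ⋃ a : blockDigits b D n, (b ^ n)⁻¹ • ((a : ℝ) +ᵥ digitSet b D) := by
  intro x hx
  rw [digitSet_eq_inv_pow_smul_blockDigits_add hb D n] at hx
  obtain ⟨_, ⟨a, ha, y, hy, rfl⟩, rfl⟩ := hx
  exact Set.mem_iUnion.2 ⟨⟨a, ha⟩, Set.smul_mem_smul_set (Set.vadd_mem_vadd_set hy)⟩

lemma ediam_inv_pow_smul_vadd (hb : 0 ≤ b) (n : ℕ) (a : ℝ) (K : Set ℝ) :
    Metric.ediam ((b ^ n)⁻¹ • (a +ᵥ K)) = ENNReal.ofReal b⁻¹ ^ n * Metric.ediam K := by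
  rw [ediam_smul₀, ediam_vadd, ← inv_pow, nnnorm_pow, ENNReal.smul_def, smul_eq_mul,
    ENNReal.coe_pow, ← enorm_eq_nnnorm, Real.enorm_of_nonneg (inv_nonneg.2 hb)]

lemma natCast_mul_ofReal_inv_rpow_logb (hb : 1 < b) {N : ℕ} (hN : N ≠ 0) :
    (N : ℝ≥0∞) * ENNReal.ofReal b⁻¹ ^ Real.logb b N = 1 := by
  have hb₀ : 0 < b := zero_lt_one.trans hb
  have hN₀ : (0 : ℝ) < N := mod_cast Nat.pos_of_ne_zero hN
  rw [ENNReal.ofReal_rpow_of_pos (inv_pos.2 hb₀), Real.inv_rpow hb₀.le,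
    Real.rpow_logb hb₀ hb.ne' hN₀, ← ENNReal.ofReal_natCast, ← ENNReal.ofReal_mul hN₀.le,
    mul_inv_cancel₀ hN₀.ne', ENNReal.ofReal_one]

lemma hausdorffMeasure_digitSet_le (hb : 1 < b) (hD : D.Nonempty) :
    μH[Real.logb b #D] (digitSet b D) ≤ Metric.ediam (digitSet b D) ^ Real.logb b #D := by
  set K := digitSet b D
  set s := Real.logb b #D
  set q : ℝ≥0∞ := ENNReal.ofReal b⁻¹
  have hb₀ : 0 ≤ b := (zero_lt_one.trans hb).le
  have hs₀ : 0 ≤ s := Real.logb_nonneg hb (mod_cast hD.card_pos)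
  have hK : Metric.ediam K ≠ ∞ :=
    (isCompact_digitSet hb D.finite_toSet.isCompact).isBounded.ediam_ne_top
  have hmesh : Tendsto (fun n ↦ q ^ n * Metric.ediam K) atTop (𝓝 0) := by
    have hq₁ : q < 1 := ENNReal.ofReal_lt_one.2 (inv_lt_one_of_one_lt₀ hb)
    simpa using ENNReal.Tendsto.mul_const (ENNReal.tendsto_pow_atTop_nhds_zero_of_lt_one hq₁)
      (Or.inr hK)
  have hsum (n : ℕ) : ∑ a : blockDigits b D n, Metric.ediam ((b ^ n)⁻¹ • ((a : ℝ) +ᵥ K)) ^ s ≤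
      Metric.ediam K ^ s := by
    simp only [ediam_inv_pow_smul_vadd hb₀, sum_const, card_univ, Fintype.card_coe, nsmul_eq_mul]
    calc (#(blockDigits b D n) : ℝ≥0∞) * (q ^ n * Metric.ediam K) ^ s
        ≤ #D ^ n * (q ^ n * Metric.ediam K) ^ s := by
          gcongr
          exact_mod_cast card_blockDigits_le b D n
      _ = (#D * q ^ s) ^ n * Metric.ediam K ^ s := by
          rw [ENNReal.mul_rpow_of_nonneg _ _ hs₀, mul_pow, mul_assoc, ← ENNReal.rpow_mul_natCast,
            mul_comm s, ENNReal.rpow_natCast_mul]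
      _ = Metric.ediam K ^ s := by
          rw [natCast_mul_ofReal_inv_rpow_logb hb hD.card_ne_zero, one_pow, one_mul]
  calc μH[s] K ≤ liminf (fun n ↦ ∑ a : blockDigits b D n,
          Metric.ediam ((b ^ n)⁻¹ • ((a : ℝ) +ᵥ K)) ^ s) atTop :=
        Measure.hausdorffMeasure_le_liminf_sum s K _ hmesh _
          (Eventually.of_forall fun n a ↦ (ediam_inv_pow_smul_vadd hb₀ n a K).le)
          (Eventually.of_forall (digitSet_subset_iUnion_inv_pow_smul_vadd hb D))
    _ ≤ Metric.ediam K ^ s := liminf_le_of_frequently_le' (Frequently.of_forall hsum)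

lemma dimH_digitSet_le_logb (hb : 1 < b) (hD : D.Nonempty) :
    dimH (digitSet b D) ≤ ENNReal.ofReal (Real.logb b #D) := by
  have hs : 0 ≤ Real.logb b #D := Real.logb_nonneg hb (mod_cast hD.card_pos)
  have hK := (isCompact_digitSet hb D.finite_toSet.isCompact).isBounded.ediam_ne_top
  refine dimH_le_of_hausdorffMeasure_ne_top ?_
  rw [Real.coe_toNNReal _ hs]
  exact ((hausdorffMeasure_digitSet_le hb hD).trans_lt (ENNReal.rpow_lt_top_of_nonneg hs hK)).ne

end SelfSimilarity

section CoveringByBlocks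

lemma eventually_mul_log_mul_add_one_le_rpow {c ε : ℝ} (hc : c ≠ 0) (hε : 0 < ε) :
    ∀ᶠ x : ℝ in atTop, c * Real.log (c * x) + 1 ≤ x ^ ε := by
  have hconst (a : ℝ) : (fun _ ↦ a) =o[atTop] fun x : ℝ ↦ x ^ ε :=
    Asymptotics.isLittleO_const_left.2
      (Or.inr (tendsto_norm_atTop_atTop.comp (tendsto_rpow_atTop hε)))
  have hlittle : (fun x ↦ c * (Real.log c + Real.log x) + 1) =o[atTop] fun x ↦ x ^ ε :=
    (((hconst _).add (isLittleO_log_rpow_atTop hε)).const_mul_left c).add (hconst 1)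
  filter_upwards [hlittle.bound one_pos, eventually_gt_atTop 0] with x hx hx₀
  rw [one_mul, Real.norm_of_nonneg (Real.rpow_nonneg hx₀.le ε)] at hx
  rw [Real.log_mul hc hx₀.ne']
  exact (Real.le_norm_self _).trans hx

lemma neg_add_Icc_subset_Icc {A : Finset ℤ} {N : ℤ} (hA : A ⊆ Ico 0 N) (x y : ℤ) :
    -A + Icc x y ⊆ Icc (x - N) y := by
  intro t ht
  obtain ⟨c, hc, u, hu, rfl⟩ := mem_add.1 ht
  obtain ⟨a, ha, rfl⟩ := mem_neg.1 hc
  have := mem_Ico.1 (hA ha)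
  have := mem_Icc.1 hu
  rw [mem_Icc]
  lia

lemma exists_Icc_subset_add_card_le {N : ℕ} {A : Finset ℤ} (hA : A.Nonempty)
    (hAN : A ⊆ Ico 0 (N : ℤ)) {L : ℕ} (hL : L ≠ 0) :
    ∃ B : Finset ℤ, Icc (-(L * N : ℤ)) (L * N) ⊆ A + B ∧
      (#B : ℝ) ≤ N / #A * (4 * L * Real.log (4 * L * N) + 1) := by
  set U := Icc (-(L * N : ℤ)) (L * N)
  have hAcard : #A ≤ N := by simpa using card_le_card hAN
  have hA₀ : 0 < #A := hA.card_pos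
  have hNLN : N ≤ L * N := Nat.le_mul_of_pos_left N (Nat.pos_of_ne_zero hL)
  have htranslates : #(-A + U) ≤ 4 * L * N := by
    refine (card_le_card (neg_add_Icc_subset_Icc hAN _ _)).trans ?_
    rw [Int.card_Icc]
    lia
  have hUcard : #U ≤ 4 * L * N := (card_le_card_add_left hA.neg).trans htranslates
  have hU₀ : 0 < #U := card_pos.2 (nonempty_Icc.2 (by lia))
  obtain ⟨B, hcover, hB⟩ := exists_subset_add_card_le hA U
  refine ⟨B, hcover, hB.trans ?_⟩
  calc #(-A + U) / #A * Real.log #U + 1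
      ≤ (4 * L * N) / #A * Real.log (4 * L * N) + N / #A := by
        gcongr
        · exact_mod_cast htranslates
        · exact_mod_cast hUcard
        · rw [one_le_div (mod_cast hA₀)]
          exact_mod_cast hAcard
    _ = N / #A * (4 * L * Real.log (4 * L * N) + 1) := by ring

lemma exists_Icc_subset_blockDigits_add_logb_card_le {b : ℕ} (hb : 1 < b) {D : Finset ℤ}
    (hD : D.Nonempty) (hDb : D ⊆ Ico 0 (b : ℤ)) {L : ℕ} (hL : L ≠ 0) {ε : ℝ} (hε : 0 < ε) :
    ∃ m ≠ 0, ∃ B : Finset ℤ, B.Nonempty ∧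
      Icc (-(L * b ^ m : ℤ)) (L * b ^ m) ⊆ blockDigits (b : ℤ) D m + B ∧
      Real.logb (b ^ m) #B ≤ 1 - Real.log #D / Real.log b + ε := by
  have hbR : (1 : ℝ) < b := mod_cast hb
  obtain ⟨m, hm, hlog⟩ := ((eventually_ne_atTop 0).and
    ((tendsto_pow_atTop_atTop_of_one_lt hbR).eventually
      (eventually_mul_log_mul_add_one_le_rpow (c := 4 * L) (by positivity) hε))).exists
  obtain ⟨B, hcover, hB⟩ := exists_Icc_subset_add_card_le (N := b ^ m)
    (blockDigits_nonempty (b : ℤ) hD m) (mod_cast blockDigits_subset_Ico hDb m) hL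
  push_cast at hcover hB
  have hBne : B.Nonempty := by
    have hU : (Icc (-(L * b ^ m : ℤ)) (L * b ^ m)).Nonempty :=
      nonempty_Icc.2 (neg_le_self (by positivity))
    exact (add_nonempty.1 (hU.mono hcover)).2
  refine ⟨m, hm, B, hBne, hcover, ?_⟩
  have hbm : (1 : ℝ) < b ^ m := one_lt_pow₀ hbR hm
  have hbm₀ : (0 : ℝ) < b ^ m := zero_lt_one.trans hbm
  have hD₀ : (0 : ℝ) < #D := mod_cast hD.card_pos
  have hrpow : ((b : ℝ) ^ m) ^ (1 - Real.log #D / Real.log b + ε) =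
      b ^ m / #D ^ m * ((b : ℝ) ^ m) ^ ε := by
    rw [Real.rpow_add hbm₀, Real.rpow_sub hbm₀, Real.rpow_one, ← Real.rpow_pow_comm (by positivity),
      Real.log_div_log, Real.rpow_logb (by positivity) hbR.ne' hD₀]
  rw [Real.logb_le_iff_le_rpow hbm (mod_cast hBne.card_pos), hrpow]
  calc (#B : ℝ) ≤ b ^ m / #D ^ m * (4 * L * Real.log (4 * L * b ^ m) + 1) := by
        simpa only [card_blockDigits_of_subset_Ico hDb, Nat.cast_pow] using hB
    _ ≤ b ^ m / #D ^ m * ((b : ℝ) ^ m) ^ ε := by gcongr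

lemma Icc_neg_subset_digitSet {N L : ℕ} (hN : 1 < N) (hL : L ≠ 0) :
    Set.Icc (-L : ℝ) L ⊆
      digitSet N (Int.cast '' (Icc (-(L * N : ℤ)) (L * N) : Set ℤ)) := by
  have hN₀ : (0 : ℝ) < N := by positivity
  have hL₁ : (1 : ℝ) ≤ L := mod_cast Nat.one_le_iff_ne_zero.2 hL
  refine subset_digitSet_of_subset_inv_smul_add (mod_cast hN)
    ((finite_toSet _).image _).isBounded (Metric.isBounded_Icc _ _) fun x hx ↦ ?_
  have hfract : Int.fract (N * x) ∈ Set.Icc (-L : ℝ) L :=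
    ⟨by linarith [Int.fract_nonneg (N * x)], by linarith [Int.fract_lt_one (N * x)]⟩
  have hfloor : ⌊N * x⌋ ∈ Icc (-(L * N : ℤ)) (L * N) := by
    rw [mem_Icc, Int.le_floor, ← Int.cast_le (R := ℝ)]
    push_cast
    exact ⟨by nlinarith [hx.1], (Int.floor_le _).trans (by nlinarith [hx.2])⟩
  exact ⟨N * x, ⟨⌊N * x⌋, ⟨_, mem_coe.2 hfloor, rfl⟩, Int.fract (N * x), hfract,
    Int.floor_add_fract _⟩, inv_mul_cancel_left₀ hN₀.ne' x⟩

lemma Icc_neg_subset_digitSet_add_digitSet {b m L : ℕ} (hb : 1 < b) (hm : m ≠ 0) (hL : L ≠ 0)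
    {D B : Finset ℤ} (hD : D.Nonempty)
    (hcover : Icc (-(L * b ^ m : ℤ)) (L * b ^ m) ⊆ blockDigits (b : ℤ) D m + B) :
    Set.Icc (-L : ℝ) L ⊆
      digitSet b (Int.cast '' (D : Set ℤ)) + digitSet (b ^ m) (Int.cast '' (B : Set ℤ)) := by
  let A := blockDigits (b : ℤ) D m
  have hbm : (1 : ℝ) < (b : ℝ) ^ m := one_lt_pow₀ (mod_cast hb) hm
  have hbdd (S : Finset ℤ) : IsBounded (Int.cast '' (S : Set ℤ) : Set ℝ) :=
    (S.finite_toSet.image _).isBounded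
  have hcast : (Int.cast '' (Icc (-(L * b ^ m : ℤ)) (L * b ^ m) : Set ℤ) : Set ℝ) ⊆
      Int.cast '' (A : Set ℤ) + Int.cast '' (B : Set ℤ) := by
    refine (Set.image_mono hcover).trans_eq ?_
    rw [coe_add]
    exact Set.image_add (Int.castRingHom ℝ)
  calc Set.Icc (-L : ℝ) L
      ⊆ digitSet (b ^ m) (Int.cast '' (Icc (-(L * b ^ m : ℤ)) (L * b ^ m) : Set ℤ)) :=
        mod_cast Icc_neg_subset_digitSet (one_lt_pow₀ hb hm) hL
    _ ⊆ digitSet (b ^ m) (Int.cast '' (A : Set ℤ) + Int.cast '' (B : Set ℤ)) := digitSet_mono hcast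
    _ ⊆ digitSet (b ^ m) (Int.cast '' (A : Set ℤ)) + digitSet (b ^ m) (Int.cast '' (B : Set ℤ)) :=
        digitSet_add_subset hbm (hbdd A) (hbdd B)
    _ ⊆ digitSet b (Int.cast '' (D : Set ℤ)) + digitSet (b ^ m) (Int.cast '' (B : Set ℤ)) :=
        Set.add_subset_add_right (digitSet_pow_intCast_blockDigits_subset hb hD hm)

lemma exists_subset_Icc_neg_natCast {K : Set ℝ} (hK : IsBounded K) :
    ∃ L : ℕ, L ≠ 0 ∧ K ⊆ Set.Icc (-L : ℝ) L := by
  obtain ⟨C, hC⟩ := hK.exists_norm_le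
  obtain ⟨L, hL⟩ := exists_nat_ge C
  refine ⟨L + 1, L.succ_ne_zero, fun x hx ↦ abs_le.1 ((hC x hx).trans (hL.trans ?_))⟩
  push_cast
  linarith

end CoveringByBlocks

theorem exists_compact_complement_set_general {b : ℕ} (hb : 1 < b) {D : Finset ℤ}
    (hD : D.Nonempty) (hDb : D ⊆ Ico 0 (b : ℤ)) {K : Set ℝ} (hK : IsBounded K) {ε : ℝ}
    (hε : 0 < ε) :
    ∃ E : Set ℝ, IsCompact E ∧ K ⊆ digitSet b (Int.cast '' (D : Set ℤ)) + E ∧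
      dimH E ≤ ENNReal.ofReal (1 - Real.log #D / Real.log b + ε) := by
  obtain ⟨L, hL, hKL⟩ := exists_subset_Icc_neg_natCast hK
  obtain ⟨m, hm, B, hB, hcover, hdim⟩ :=
    exists_Icc_subset_blockDigits_add_logb_card_le hb hD hDb hL hε
  have hbm : (1 : ℝ) < (b : ℝ) ^ m := one_lt_pow₀ (mod_cast hb) hm
  refine ⟨digitSet (b ^ m) (Int.cast '' (B : Set ℤ)),
    isCompact_digitSet hbm (B.finite_toSet.image _).isCompact,
    hKL.trans (Icc_neg_subset_digitSet_add_digitSet hb hm hL hD hcover), ?_⟩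
  rw [← card_image_of_injective B (Int.cast_injective (α := ℝ))] at hdim
  rw [← coe_image]
  exact (dimH_digitSet_le_logb hbm (hB.image _)).trans (ENNReal.ofReal_le_ofReal hdim)

/-- For every `ε > 0` there is a compact set `E ⊆ ℝ` with `𝒞 + E ⊇ [0,2]` and
`dim_H E ≤ 1 − log 2 / log 3 + ε`. -/
theorem exists_compact_complement_set (ε : ℝ) (hε : 0 < ε) :
    ∃ E : Set ℝ, IsCompact E ∧ Set.Icc (0 : ℝ) 2 ⊆ ternaryCantorSet + E ∧
      dimH E ≤ ENNReal.ofReal (1 - Real.log 2 / Real.log 3 + ε) := by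
  simpa [ternaryCantorSet_eq_digitSet, Set.image_pair] using exists_compact_complement_set_general
    (b := 3) (D := {0, 2}) (by norm_num) (by simp) (by decide) (Metric.isBounded_Icc 0 2) hε
end

section
/- For every real number r ∈ [0,1) there exists a point t in the middle-thirds Cantor set 𝒞 such that the sum r + t admits a ternary expansion ∑_{n≥1} dₙ 3⁻ⁿ in which every digit dₙ lies in {1,2}. -/
/-!
Since `{1, 2} - {0, 2} = {-1, 0, 1, 2}`, a series `∑ eₙ 3⁻ⁿ` with digits in `{-1, 0, 1, 2}` is
turned, digit by digit and without carries, into a series with digits in `{1, 2}` by adding a point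
of the Cantor set. The digits `{0, 1, 2}` represent every point of `[0, 1]`, and subtracting
`1/2 = ∑ 3⁻ⁿ` shows that the digits `{-1, 0, 1}` represent every point of `[-1/2, 1/2]`.
-/

lemma summable_div_pow_succ_of_abs_le {b C : ℝ} (hb : 1 < b) {a : ℕ → ℝ} (ha : ∀ n, |a n| ≤ C) :
    Summable fun n ↦ a n / b ^ (n + 1) := by
  have hgeom : Summable fun n : ℕ ↦ C * b⁻¹ ^ (n + 1) :=
    ((summable_nat_add_iff 1).2 <|
      summable_geometric_of_lt_one (by positivity) (inv_lt_one_of_one_lt₀ hb)).mul_left C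
  refine hgeom.of_norm_bounded fun n ↦ ?_
  rw [Real.norm_eq_abs, div_eq_mul_inv, ← inv_pow, abs_mul,
    abs_of_nonneg (by positivity : 0 ≤ b⁻¹ ^ (n + 1))]
  gcongr
  exact ha n

lemma hasSum_one_div_pow_succ {b : ℝ} (hb : 1 < b) :
    HasSum (fun n : ℕ ↦ 1 / b ^ (n + 1)) (1 / (b - 1)) := by
  have hgeom := (hasSum_geometric_of_lt_one (by positivity) (inv_lt_one_of_one_lt₀ hb)).mul_left b⁻¹
  have hlimit : b⁻¹ * (1 - b⁻¹)⁻¹ = 1 / (b - 1) := by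
    rw [← mul_inv, mul_sub, mul_one, mul_inv_cancel₀ (by positivity), one_div]
  simpa only [hlimit, one_div, pow_succ', mul_inv, inv_pow] using hgeom

lemma exists_hasSum_digits_div_pow_succ {b : ℕ} (hb : 1 < b) {r : ℝ} (hr : r ∈ Set.Icc 0 1) :
    ∃ e : ℕ → Fin b, HasSum (fun n ↦ ((e n : ℕ) : ℝ) / b ^ (n + 1)) r := by
  obtain ⟨e, -, rfl⟩ := Real.ofDigits_SurjOn hb hr
  exact ⟨e, by simpa only [Real.ofDigitsTerm, div_eq_mul_inv] using!
    (Real.summable_ofDigitsTerm (digits := e)).hasSum⟩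

lemma exists_hasSum_ternary {r : ℝ} (hr : r ∈ Set.Icc 0 1) :
    ∃ e : ℕ → ℝ, (∀ n, e n = 0 ∨ e n = 1 ∨ e n = 2) ∧ HasSum (fun n ↦ e n / 3 ^ (n + 1)) r := by
  obtain ⟨e, he⟩ := exists_hasSum_digits_div_pow_succ (b := 3) (by norm_num) hr
  refine ⟨fun n ↦ (e n : ℕ), fun n ↦ ?_, mod_cast he⟩
  have hdigit : e n = 0 ∨ e n = 1 ∨ e n = 2 := by lia
  rcases hdigit with h | h | h <;> simp [h]

lemma exists_hasSum_balanced_ternary {r : ℝ} (hr : r ∈ Set.Icc (-1 / 2) (1 / 2)) :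
    ∃ e : ℕ → ℝ, (∀ n, e n = -1 ∨ e n = 0 ∨ e n = 1) ∧ HasSum (fun n ↦ e n / 3 ^ (n + 1)) r := by
  have hshift : r + 1 / 2 ∈ Set.Icc (0 : ℝ) 1 := ⟨by linarith [hr.1], by linarith [hr.2]⟩
  obtain ⟨e, he, hsum⟩ := exists_hasSum_ternary hshift
  refine ⟨fun n ↦ e n - 1, fun n ↦ ?_, ?_⟩
  · rcases he n with h | h | h <;> norm_num [h]
  · have hhalf : HasSum (fun n : ℕ ↦ (1 : ℝ) / 3 ^ (n + 1)) (1 / 2) := by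
      convert! hasSum_one_div_pow_succ (b := 3) (by norm_num) using 1
      norm_num
    simpa only [sub_div, add_sub_cancel_right] using hsum.sub hhalf

lemma exists_hasSum_neg_one_zero_one_two {r : ℝ} (hr : r ∈ Set.Icc (-1 / 2) 1) :
    ∃ e : ℕ → ℝ, (∀ n, e n = -1 ∨ e n = 0 ∨ e n = 1 ∨ e n = 2) ∧
      HasSum (fun n ↦ e n / 3 ^ (n + 1)) r := by
  rcases le_total 0 r with hr₀ | hr₀
  · obtain ⟨e, he, hsum⟩ := exists_hasSum_ternary ⟨hr₀, hr.2⟩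
    exact ⟨e, fun n ↦ Or.inr (he n), hsum⟩
  · obtain ⟨e, he, hsum⟩ := exists_hasSum_balanced_ternary ⟨hr.1, by linarith⟩
    exact ⟨e, fun n ↦ by rcases he n with h | h | h <;> simp [h], hsum⟩

lemma exists_zero_or_two_add_eq_one_or_two {x : ℝ} (hx : x = -1 ∨ x = 0 ∨ x = 1 ∨ x = 2) :
    ∃ a : ℝ, (a = 0 ∨ a = 2) ∧ (x + a = 1 ∨ x + a = 2) := by
  rcases hx with rfl | rfl | rfl | rfl
  · exact ⟨2, by norm_num⟩
  · exact ⟨2, by norm_num⟩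
  · exact ⟨0, by norm_num⟩
  · exact ⟨0, by norm_num⟩

theorem exists_cantor_translate_digits_one_two_general {r : ℝ} (hr : r ∈ Set.Icc (-1 / 2) 1) :
    ∃ t ∈ ternaryCantorSet, ∃ d : ℕ → ℝ,
      (∀ n, d n = 1 ∨ d n = 2) ∧ r + t = ∑' n : ℕ, d n / 3 ^ (n + 1) := by
  obtain ⟨e, he, hr_sum⟩ := exists_hasSum_neg_one_zero_one_two hr
  choose a ha hd using fun n ↦ exists_zero_or_two_add_eq_one_or_two (he n)
  have ha_summable : Summable fun n ↦ a n / 3 ^ (n + 1) :=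
    summable_div_pow_succ_of_abs_le (C := 2) (by norm_num) fun n ↦ by
      rcases ha n with h | h <;> norm_num [h]
  refine ⟨∑' n, a n / 3 ^ (n + 1), ⟨a, ha, rfl⟩, fun n ↦ e n + a n, hd, ?_⟩
  simpa only [add_div] using (hr_sum.add ha_summable.hasSum).tsum_eq.symm

/-- For every `r ∈ [0,1)` there is `t ∈ 𝒞` such that `r + t` admits a ternary
expansion all of whose digits lie in `{1, 2}`. -/
theorem exists_cantor_translate_digits_one_two (r : ℝ) (hr : r ∈ Set.Ico (0 : ℝ) 1) :
    ∃ t ∈ ternaryCantorSet, ∃ d : ℕ → ℝ,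
      (∀ n, d n = 1 ∨ d n = 2) ∧ r + t = ∑' n : ℕ, d n / 3 ^ (n + 1) :=
  exists_cantor_translate_digits_one_two_general ⟨by linarith [hr.1], hr.2.le⟩
end

section
/- Let D be a real number with 0 < D ≤ 1 and let n be a positive integer. Among all fractions r/s with r, s positive integers, s ≤ n, and r/s ≤ 1/D, let r/s be one attaining the maximal value. Then for every integer y with 1 ≤ y ≤ n, one has ⌊y/D⌋ = ⌊r·y/s⌋. -/
/-!
The fraction `⌊α * y⌋ / y` has denominator `y ≤ n` and is at most `α`, so it competes with the best
lower approximation `β`. Hence `⌊α * y⌋ ≤ β * y ≤ α * y`, which forces the two floors to agree.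
-/

section

variable {K : Type*} [Field K] [LinearOrder K] [IsStrictOrderedRing K] [FloorRing K]

theorem floor_mul_eq_floor_mul_of_floor_div_le {α β y : K} (hy : 0 < y) (hβα : β ≤ α)
    (hfloor : (⌊α * y⌋ : K) / y ≤ β) : ⌊α * y⌋ = ⌊β * y⌋ := by
  apply le_antisymm
  · exact Int.le_floor.mpr ((div_le_iff₀ hy).mp hfloor)
  · gcongr

theorem floor_eq_of_best_rational_approx_general {α β : K} {n : ℕ} (hβ : 0 ≤ β) (hβα : β ≤ α)
    (hmax : ∀ r s : ℕ, 0 < r → 0 < s → s ≤ n → (r : K) / s ≤ α → (r : K) / s ≤ β)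
    {y : ℕ} (hyn : y ≤ n) : ⌊α * y⌋ = ⌊β * y⌋ := by
  rcases y.eq_zero_or_pos with rfl | hy
  · simp
  have hyK : (0 : K) < y := Nat.cast_pos.mpr hy
  have hαy : 0 ≤ α * y := mul_nonneg (hβ.trans hβα) hyK.le
  have hfloor_le : (⌊α * y⌋₊ : K) / y ≤ α := (div_le_iff₀ hyK).mpr (Nat.floor_le hαy)
  apply floor_mul_eq_floor_mul_of_floor_div_le hyK hβα
  rw [← natCast_floor_eq_intCast_floor hαy]
  rcases Nat.eq_zero_or_pos ⌊α * y⌋₊ with hzero | hpos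
  · simpa [hzero] using hβ
  · exact hmax _ y hpos hy hyn hfloor_le

end

/-- Let `0 < D ≤ 1`, let `n ≥ 1`, and let `r/s` attain the maximum of all
fractions `r'/s'` with `r', s'` positive integers, `s' ≤ n` and `r'/s' ≤ 1/D`.
Then `⌊y/D⌋ = ⌊r·y/s⌋` for every `1 ≤ y ≤ n`. -/
theorem floor_eq_of_best_rational_approx (D : ℝ) (hD0 : 0 < D) (hD1 : D ≤ 1)
    (n : ℕ) (hn : 0 < n) (r s : ℕ) (hr : 0 < r) (hs : 0 < s) (hsn : s ≤ n)
    (hle : (r : ℝ) / s ≤ 1 / D)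
    (hmax : ∀ r' s' : ℕ, 0 < r' → 0 < s' → s' ≤ n → (r' : ℝ) / s' ≤ 1 / D →
      (r' : ℝ) / s' ≤ (r : ℝ) / s) :
    ∀ y : ℕ, 1 ≤ y → y ≤ n → ⌊(y : ℝ) / D⌋ = ⌊((r : ℝ) * y) / s⌋ := by
  intro y _ hyn
  rw [← one_div_mul_eq_div, mul_div_right_comm]
  exact floor_eq_of_best_rational_approx_general (by positivity) hle hmax hyn
end

section
/- Let α be a real number with 1 − log 2/log 3 ≤ α < 1, let D = (1 − α)/(log 2/log 3), and let A = {⌊y/D⌋ : y a positive integer}. Then there exists a closed set E ⊆ ℝ such that 𝒞_A + E = [0,2] and the Hausdorff dimension of E is at most α. -/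
open scoped Pointwise

/-- `𝒞_A`: reals `∑_{n≥1} aₙ 3⁻ⁿ` where each `aₙ ∈ {0,2}` and `aₙ = 2` only
for positions `n ∈ A`. -/
def cantorSetRestricted (A : Set ℕ) : Set ℝ :=
  {x | ∃ a : ℕ → ℝ, (∀ n, a n = 0 ∨ a n = 2) ∧ (∀ n, a n = 2 → (n + 1) ∈ A) ∧
    x = ∑' n : ℕ, a n / 3 ^ (n + 1)}

/-!
Cut the ternary digits into blocks, the `j`-th of length `L = 2 * j + 1`. Since every window of `A`
has density `D` up to a bounded error, the `j`-th blocks of points of `𝒞_A` form a set of at least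
`c * (3 ^ L) ^ (1 - α)` integers in `[0, 3 ^ L)`, and a greedy choice (Lorentz's lemma) covers
`[0, 3 ^ L)` by `O(L * (3 ^ L) ^ α)` translates of it. The series whose `j`-th block is one of these
translations form a compact set `K`, of dimension at most `α` because the factors `L` are negligible
for blocks of growing length, and `𝒞_A + (K + ℤ) = ℝ`.

To stay inside `[0, 2]`, apply this to the tails `A ∩ (k, ∞)`, which have the same density and
satisfy `𝒞_{A ∩ (k, ∞)} ⊆ [0, 3 ^ (-k)]`. Gluing the resulting complements along dyadic scales
around `0` gives a closed `E ⊆ [0, 1]` with `[0, 1] ⊆ 𝒞_A + E`, and the reflection symmetry of `𝒞_A`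
takes care of `[1, 2]`.
-/

open Filter Finset
open scoped Topology ENNReal NNReal

section Covering

variable {ι β : Type*} {r : ι → β → Prop} [∀ u z, Decidable (r u z)] {U : Finset ι}
  {Z : Finset β} {δ : ℝ}

lemma exists_mem_mul_card_le_card_filter (hU : U.Nonempty)
    (h : ∀ z ∈ Z, δ * #U ≤ #{u ∈ U | r u z}) : ∃ u ∈ U, δ * #Z ≤ #{z ∈ Z | r u z} := by
  refine exists_le_of_sum_le hU ?_
  calc ∑ _u ∈ U, δ * #Z = ∑ _z ∈ Z, δ * #U := by
        simp only [sum_const, nsmul_eq_mul]; ring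
    _ ≤ ∑ z ∈ Z, (#{u ∈ U | r u z} : ℝ) := sum_le_sum h
    _ = ∑ u ∈ U, (#{z ∈ Z | r u z} : ℝ) := by
        exact_mod_cast (sum_card_bipartiteAbove_eq_sum_card_bipartiteBelow r).symm

lemma exists_subset_card_filter_uncovered_le (hU : U.Nonempty)
    (h : ∀ z ∈ Z, δ * #U ≤ #{u ∈ U | r u z}) (n : ℕ) :
    ∃ T ⊆ U, #T ≤ n ∧ (#{z ∈ Z | ∀ u ∈ T, ¬r u z} : ℝ) ≤ #Z * Real.exp (-(n * δ)) := by
  classical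
  induction n with
  | zero => exact ⟨∅, by simp, by simp, by simp⟩
  | succ n ih =>
    obtain ⟨T, hTU, hTn, hT⟩ := ih
    set R := {z ∈ Z | ∀ u ∈ T, ¬r u z}
    obtain ⟨u, hu, hcov⟩ := exists_mem_mul_card_le_card_filter hU fun z (hz : z ∈ R) =>
      h z (mem_of_mem_filter z hz)
    refine ⟨insert u T, insert_subset hu hTU, (card_insert_le _ _).trans (by lia), ?_⟩
    have huncovered : {z ∈ Z | ∀ v ∈ insert u T, ¬r v z} = {z ∈ R | ¬r u z} := by
      ext z; simp only [R, mem_filter, mem_insert]; grind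
    have hsplit : (#{z ∈ R | r u z} : ℝ) + #{z ∈ R | ¬r u z} = #R := by
      exact_mod_cast card_filter_add_card_filter_not _
    calc (#{z ∈ Z | ∀ v ∈ insert u T, ¬r v z} : ℝ) = #R - #{z ∈ R | r u z} := by
          rw [huncovered]; linarith
      _ ≤ #R * (-δ + 1) := by linarith
      _ ≤ #R * Real.exp (-δ) := by
          gcongr
          exact Real.add_one_le_exp _
      _ ≤ #Z * Real.exp (-(n * δ)) * Real.exp (-δ) := by gcongr
      _ = #Z * Real.exp (-((n + 1 : ℕ) * δ)) := by
          rw [mul_assoc, ← Real.exp_add]; push_cast; ring_nf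

lemma exists_subset_forall_exists_of_card_lt_exp (hU : U.Nonempty)
    (h : ∀ z ∈ Z, δ * #U ≤ #{u ∈ U | r u z}) {n : ℕ} (hn : #Z < Real.exp (n * δ)) :
    ∃ T ⊆ U, #T ≤ n ∧ ∀ z ∈ Z, ∃ u ∈ T, r u z := by
  obtain ⟨T, hTU, hTn, hT⟩ := exists_subset_card_filter_uncovered_le hU h n
  have hlt : (#{z ∈ Z | ∀ u ∈ T, ¬r u z} : ℝ) < 1 := by
    refine hT.trans_lt ?_
    rwa [Real.exp_neg, ← div_eq_mul_inv, div_lt_one (Real.exp_pos _)]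
  have hempty : #{z ∈ Z | ∀ u ∈ T, ¬r u z} = 0 := Nat.lt_one_iff.1 (by exact_mod_cast hlt)
  refine ⟨T, hTU, hTn, fun z hz => ?_⟩
  simpa using filter_eq_empty_iff.1 (card_eq_zero.1 hempty) hz

end Covering

lemma exists_subset_sub_subset_add {G : Type*} [AddCommGroup G] [DecidableEq G] (S Z : Finset G)
    {n : ℕ} (hn : #Z < Real.exp (n * (#S / #(Z - S)))) :
    ∃ T ⊆ Z - S, #T ≤ n ∧ Z ⊆ S + T := by
  rcases (Z - S).eq_empty_or_nonempty with hU | hU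
  · have hZ : Z = ∅ := by simpa [hU] using hn
    exact ⟨∅, by simp, by simp, by simp [hZ]⟩
  have hcount : ∀ z ∈ Z, (#S / #(Z - S) : ℝ) * #(Z - S) ≤ #{u ∈ Z - S | z - u ∈ S} := by
    intro z hz
    rw [div_mul_cancel₀ _ (by simpa using hU.ne_empty), Nat.cast_le]
    refine card_le_card_of_injOn (z - ·) (fun s hs => ?_) sub_right_injective.injOn
    simpa using ⟨sub_mem_sub hz hs, hs⟩
  obtain ⟨T, hTU, hTn, hT⟩ := exists_subset_forall_exists_of_card_lt_exp hU hcount hn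
  refine ⟨T, hTU, hTn, fun z hz => ?_⟩
  obtain ⟨t, ht, hzt⟩ := hT z hz
  exact mem_add.2 ⟨z - t, hzt, t, ht, sub_add_cancel z t⟩

lemma Ico_sub_subset_Ioo {b : ℕ} {S : Finset ℤ} (hSb : S ⊆ Ico 0 (b : ℤ)) :
    Ico 0 (b : ℤ) - S ⊆ Ioo (-b : ℤ) b := by
  intro u hu
  obtain ⟨z, hz, s, hs, rfl⟩ := mem_sub.1 hu
  have := mem_Ico.1 (hSb hs)
  have := mem_Ico.1 hz
  exact mem_Ioo.2 (by lia)

lemma exists_card_mul_card_le_Ico_subset_add {b : ℕ} {S : Finset ℤ} (hS : S.Nonempty)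
    (hSb : S ⊆ Ico 0 (b : ℤ)) :
    ∃ T ⊆ Ioo (-b : ℤ) b, (#T * #S : ℝ) ≤ b * (2 * Real.log b + 1) ∧ Ico 0 (b : ℤ) ⊆ S + T := by
  have hb : 0 < b := by
    obtain ⟨s, hs⟩ := hS
    have := mem_Ico.1 (hSb hs)
    lia
  have hb' : (0 : ℝ) < b := by exact_mod_cast hb
  have hS' : (0 : ℝ) < #S := by exact_mod_cast hS.card_pos
  have hSle : (#S : ℝ) ≤ b := by exact_mod_cast (card_le_card hSb).trans_eq (by simp)
  have hsub := Ico_sub_subset_Ioo hSb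
  have hpos : (0 : ℝ) < #(Ico 0 (b : ℤ) - S) := by
    exact_mod_cast ((nonempty_Ico.2 (by exact_mod_cast hb)).sub hS).card_pos
  have hcard : (#(Ico 0 (b : ℤ) - S) : ℝ) ≤ 2 * b := by
    exact_mod_cast (card_le_card hsub).trans (by rw [Int.card_Ioo]; lia)
  set n := ⌊2 * b * Real.log b / #S⌋₊ + 1
  have hn : 2 * b * Real.log b < n * #S := by
    rw [← div_lt_iff₀ hS', Nat.cast_add_one]
    exact Nat.lt_floor_add_one _
  obtain ⟨T, hTsub, hTn, hT⟩ := exists_subset_sub_subset_add S (Ico 0 (b : ℤ)) (n := n) (by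
    rw [Int.card_Ico, sub_zero, Int.toNat_natCast, ← Real.log_lt_iff_lt_exp hb', ← mul_div_assoc,
      lt_div_iff₀ hpos]
    have := Real.log_natCast_nonneg b
    nlinarith)
  refine ⟨T, hTsub.trans hsub, ?_, hT⟩
  calc (#T * #S : ℝ) ≤ n * #S := by gcongr
    _ ≤ (2 * b * Real.log b / #S + 1) * #S := by
        push_cast [n]
        gcongr
        exact Nat.floor_le (by positivity)
    _ = 2 * b * Real.log b + #S := by field_simp
    _ ≤ b * (2 * Real.log b + 1) := by linarith

lemma dimH_le_of_card_mul_rpow_le {X : Type*} [EMetricSpace X] {s : Set X} {d : ℝ≥0}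
    {ι : ℕ → Type*} [∀ n, Fintype (ι n)] {t : ∀ n, ι n → Set X} {ρ : ℕ → ℝ≥0∞}
    (hρ : Tendsto ρ atTop (𝓝 0)) (ht : ∀ n i, Metric.ediam (t n i) ≤ ρ n)
    (hs : ∀ n, s ⊆ ⋃ i, t n i) {M : ℝ≥0}
    (hM : ∀ᶠ n in atTop, Fintype.card (ι n) * ρ n ^ (d : ℝ) ≤ M) : dimH s ≤ d := by
  borelize X
  refine dimH_le_of_hausdorffMeasure_ne_top (ne_top_of_le_ne_top (ENNReal.coe_ne_top (r := M)) ?_)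
  have hsum : ∀ᶠ n in atTop, ∑ i, Metric.ediam (t n i) ^ (d : ℝ) ≤ M := by
    filter_upwards [hM] with n hn
    refine (sum_le_card_nsmul _ _ (ρ n ^ (d : ℝ)) fun i _ => ?_).trans (by simpa using hn)
    gcongr
    exact ht n i
  calc MeasureTheory.Measure.hausdorffMeasure d s
      ≤ liminf (fun n => ∑ i, Metric.ediam (t n i) ^ (d : ℝ)) atTop :=
        MeasureTheory.Measure.hausdorffMeasure_le_liminf_sum _ s ρ hρ t (.of_forall ht)
          (.of_forall hs)
    _ ≤ liminf (fun _ => (M : ℝ≥0∞)) atTop := liminf_le_liminf hsum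
    _ = M := liminf_const _

section MixedRadix

/-- The place values `b 0 * ⋯ * b (n - 1)` of the mixed-radix expansion with radices `b`. Digit `j`
of an expansion is weighted by `(placeValue b (j + 1))⁻¹`. -/
noncomputable def placeValue (b : ℕ → ℕ) (n : ℕ) : ℝ := ∏ i ∈ range n, (b i : ℝ)

/-- The reals having a mixed-radix expansion with radices `b` whose `j`-th digit lies in `T j`.
Digits may be negative. -/
def mixedRadixSet (b : ℕ → ℕ) (T : ℕ → Finset ℤ) : Set ℝ :=
  Set.range fun t : ∀ j, T j => ∑' j, ((t j : ℤ) : ℝ) / placeValue b (j + 1)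

variable {b : ℕ → ℕ}

lemma placeValue_succ (n : ℕ) : placeValue b (n + 1) = placeValue b n * b n :=
  prod_range_succ _ n

lemma two_pow_le_placeValue (hb : ∀ j, 2 ≤ b j) (n : ℕ) : 2 ^ n ≤ placeValue b n := by
  calc (2 : ℝ) ^ n = ∏ _i ∈ range n, 2 := by simp
    _ ≤ placeValue b n := prod_le_prod (by simp) fun i _ => by exact_mod_cast hb i

lemma placeValue_pos (hb : ∀ j, 2 ≤ b j) (n : ℕ) : 0 < placeValue b n :=
  (by positivity : (0 : ℝ) < 2 ^ n).trans_le (two_pow_le_placeValue hb n)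

lemma tendsto_placeValue_atTop (hb : ∀ j, 2 ≤ b j) : Tendsto (placeValue b) atTop atTop :=
  tendsto_atTop_mono (two_pow_le_placeValue hb) (tendsto_pow_atTop_atTop_of_one_lt one_lt_two)

lemma tendsto_inv_placeValue (hb : ∀ j, 2 ≤ b j) :
    Tendsto (fun n => (placeValue b n)⁻¹) atTop (𝓝 0) :=
  tendsto_inv_atTop_zero.comp (tendsto_placeValue_atTop hb)

lemma tendsto_floor_mul_div_atTop (x : ℝ) : Tendsto (fun q : ℝ => ⌊x * q⌋ / q) atTop (𝓝 x) := by
  have hlower : Tendsto (fun q : ℝ => x - q⁻¹) atTop (𝓝 x) := by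
    simpa using tendsto_inv_atTop_zero.const_sub x
  refine tendsto_of_tendsto_of_tendsto_of_le_of_le' hlower tendsto_const_nhds ?_ ?_
  all_goals filter_upwards [eventually_gt_atTop 0] with q hq
  · rw [le_div_iff₀ hq, sub_mul, inv_mul_cancel₀ hq.ne']
    exact (Int.sub_one_lt_floor _).le
  · exact (div_le_iff₀ hq).2 (Int.floor_le _)

lemma floor_natCast_mul_fract (m : ℕ) (y : ℝ) : ⌊m * Int.fract y⌋ = ⌊y * m⌋ - m * ⌊y⌋ := by
  have hcast : m * Int.fract y = y * m - ((m * ⌊y⌋ : ℤ) : ℝ) := by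
    rw [Int.fract]
    push_cast
    ring
  rw [hcast, Int.floor_sub_intCast]

lemma exists_hasSum_div_placeValue_fract (hb : ∀ j, 2 ≤ b j) (x : ℝ) :
    ∃ d : ℕ → ℤ, (∀ j, d j ∈ Ico 0 (b j : ℤ)) ∧
      HasSum (fun j => (d j : ℝ) / placeValue b (j + 1)) (Int.fract x) := by
  have hpos := placeValue_pos hb
  have hb' (j : ℕ) : (0 : ℝ) < b j := by exact_mod_cast two_pos.trans_le (hb j)
  let d (j : ℕ) : ℤ := ⌊(b j : ℝ) * Int.fract (x * placeValue b j)⌋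
  have hd (j : ℕ) : (d j : ℝ) / placeValue b (j + 1) =
      ⌊x * placeValue b (j + 1)⌋ / placeValue b (j + 1) -
        ⌊x * placeValue b j⌋ / placeValue b j := by
    have := hb' j
    have := hpos j
    rw [show d j = _ from floor_natCast_mul_fract _ _, placeValue_succ, mul_assoc x]
    push_cast
    field_simp
  have hd_nonneg (j : ℕ) : 0 ≤ d j :=
    Int.floor_nonneg.2 (mul_nonneg (hb' j).le (Int.fract_nonneg _))
  have hd_lt (j : ℕ) : d j < b j :=
    Int.floor_lt.2 (by exact_mod_cast mul_lt_of_lt_one_right (hb' j) (Int.fract_lt_one _))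
  refine ⟨d, fun j => mem_Ico.2 ⟨hd_nonneg j, hd_lt j⟩, ?_⟩
  rw [hasSum_iff_tendsto_nat_of_nonneg fun j =>
    div_nonneg (by exact_mod_cast hd_nonneg j) (hpos _).le]
  have hpartial (n : ℕ) : ∑ j ∈ range n, (d j : ℝ) / placeValue b (j + 1) =
      ⌊x * placeValue b n⌋ / placeValue b n - ⌊x⌋ := by
    rw [sum_congr rfl fun j _ => hd j,
      sum_range_sub fun j => (⌊x * placeValue b j⌋ : ℝ) / placeValue b j]
    simp [placeValue]
  simp only [hpartial]
  exact ((tendsto_floor_mul_div_atTop x).comp (tendsto_placeValue_atTop hb)).sub_const (⌊x⌋ : ℝ)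

lemma hasSum_inv_placeValue_sub_succ (hb : ∀ j, 2 ≤ b j) (n : ℕ) :
    HasSum (fun j => (placeValue b (j + n))⁻¹ - (placeValue b (j + n + 1))⁻¹)
      (placeValue b n)⁻¹ := by
  have hpos := placeValue_pos hb
  rw [hasSum_iff_tendsto_nat_of_nonneg]
  · have htel (k : ℕ) : ∑ j ∈ range k,
        ((placeValue b (j + n))⁻¹ - (placeValue b (j + n + 1))⁻¹) =
          (placeValue b n)⁻¹ - (placeValue b (k + n))⁻¹ := by
      simpa [add_right_comm] using sum_range_sub' (fun j => (placeValue b (j + n))⁻¹) k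
    simp only [htel]
    simpa using ((tendsto_add_atTop_iff_nat n).2 (tendsto_inv_placeValue hb)).const_sub
      (placeValue b n)⁻¹
  · intro j
    have hone : (1 : ℝ) ≤ b (j + n) := by exact_mod_cast one_le_two.trans (hb _)
    rw [sub_nonneg, placeValue_succ]
    exact inv_anti₀ (hpos _) (le_mul_of_one_le_right (hpos _).le hone)

lemma norm_div_placeValue_succ_le (hb : ∀ j, 2 ≤ b j) {j : ℕ} {t : ℤ}
    (ht : t ∈ Ioo (-b j : ℤ) (b j)) :
    ‖(t : ℝ) / placeValue b (j + 1)‖ ≤ (placeValue b j)⁻¹ - (placeValue b (j + 1))⁻¹ := by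
  have hpos := placeValue_pos hb j
  have hb' : (0 : ℝ) < b j := by exact_mod_cast two_pos.trans_le (hb j)
  have habs : |(t : ℝ)| + 1 ≤ b j := by
    exact_mod_cast Int.add_one_le_iff.2 (abs_lt.2 (mem_Ioo.1 ht))
  calc ‖(t : ℝ) / placeValue b (j + 1)‖ = |(t : ℝ)| / placeValue b (j + 1) := by
        rw [norm_div, Real.norm_eq_abs, Real.norm_of_nonneg (placeValue_pos hb _).le]
    _ ≤ (b j - 1) / placeValue b (j + 1) := by
        gcongr
        · exact (placeValue_pos hb _).le
        · linarith
    _ = (placeValue b j)⁻¹ - (placeValue b (j + 1))⁻¹ := by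
        rw [placeValue_succ]; field_simp

lemma summable_div_placeValue (hb : ∀ j, 2 ≤ b j) {t : ℕ → ℤ}
    (ht : ∀ j, t j ∈ Ioo (-b j : ℤ) (b j)) :
    Summable fun j => (t j : ℝ) / placeValue b (j + 1) :=
  .of_norm_bounded (hasSum_inv_placeValue_sub_succ hb 0).summable fun j =>
    norm_div_placeValue_succ_le hb (ht j)

lemma norm_tsum_sub_sum_div_placeValue_le (hb : ∀ j, 2 ≤ b j) {t : ℕ → ℤ}
    (ht : ∀ j, t j ∈ Ioo (-b j : ℤ) (b j)) (n : ℕ) :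
    ‖∑' j, (t j : ℝ) / placeValue b (j + 1) - ∑ j ∈ range n, (t j : ℝ) / placeValue b (j + 1)‖ ≤
      (placeValue b n)⁻¹ := by
  rw [← (summable_div_placeValue hb ht).sum_add_tsum_nat_add n, add_sub_cancel_left]
  exact tsum_of_norm_bounded (hasSum_inv_placeValue_sub_succ hb n) fun j =>
    norm_div_placeValue_succ_le hb (ht (j + n))

variable {S T : ℕ → Finset ℤ}

lemma tsum_div_placeValue_mem_mixedRadixSet {t : ℕ → ℤ} (ht : ∀ j, t j ∈ T j) :
    ∑' j, (t j : ℝ) / placeValue b (j + 1) ∈ mixedRadixSet b T :=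
  ⟨fun j => ⟨t j, ht j⟩, rfl⟩

lemma isCompact_mixedRadixSet (hb : ∀ j, 2 ≤ b j) (hT : ∀ j, T j ⊆ Ioo (-b j : ℤ) (b j)) :
    IsCompact (mixedRadixSet b T) := by
  refine isCompact_range (continuous_tsum (fun j => ?_)
    (hasSum_inv_placeValue_sub_succ hb 0).summable
    fun j t => norm_div_placeValue_succ_le hb (hT j (t j).2))
  exact (continuous_of_discreteTopology (f := fun x : T j =>
    ((x : ℤ) : ℝ) / placeValue b (j + 1))).comp (continuous_apply j)

lemma mixedRadixSet_subset_iUnion_closedBall (hb : ∀ j, 2 ≤ b j)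
    (hT : ∀ j, T j ⊆ Ioo (-b j : ℤ) (b j)) (n : ℕ) :
    mixedRadixSet b T ⊆ ⋃ t : ∀ j : Fin n, T j,
      Metric.closedBall (∑ j, ((t j : ℤ) : ℝ) / placeValue b (j + 1)) (placeValue b n)⁻¹ := by
  rintro _ ⟨t, rfl⟩
  refine Set.mem_iUnion.2 ⟨fun j => t j, ?_⟩
  rw [Metric.mem_closedBall, dist_eq_norm,
    Fin.sum_univ_eq_sum_range fun j => ((t j : ℤ) : ℝ) / placeValue b (j + 1)]
  exact norm_tsum_sub_sum_div_placeValue_le hb (fun j => hT j (t j).2) n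

lemma dimH_mixedRadixSet_le (hb : ∀ j, 2 ≤ b j) (hT : ∀ j, T j ⊆ Ioo (-b j : ℤ) (b j)) {α : ℝ}
    (hα : ∀ d > α, ∀ᶠ n in atTop, (∏ j ∈ range n, #(T j) : ℝ) ≤ placeValue b n ^ d) :
    dimH (mixedRadixSet b T) ≤ ENNReal.ofReal α := by
  refine le_of_forall_gt_imp_ge_of_dense fun d hd => ?_
  rcases eq_or_ne d ⊤ with rfl | hdtop
  · exact le_top
  lift d to ℝ≥0 using hdtop
  have hαd : α < d :=
    (Real.le_coe_toNNReal α).trans_lt (NNReal.coe_lt_coe.2 (ENNReal.coe_lt_coe.1 hd))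
  refine dimH_le_of_card_mul_rpow_le (ρ := fun n => ENNReal.ofReal (2 * (placeValue b n)⁻¹))
    (M := 2 ^ (d : ℝ)) ?_ (fun n t => ?_) (mixedRadixSet_subset_iUnion_closedBall hb hT) ?_
  · simpa using ENNReal.tendsto_ofReal ((tendsto_inv_placeValue hb).const_mul 2)
  · rw [Real.closedBall_eq_Icc, Real.ediam_Icc]
    exact ENNReal.ofReal_le_ofReal (by linarith)
  · filter_upwards [hα d hαd] with n hn
    have hq := (placeValue_pos hb n).le
    have hcard : (Fintype.card (∀ j : Fin n, T j) : ℝ) = ∏ j ∈ range n, (#(T j) : ℝ) := by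
      simp [Fintype.card_pi, ← Fin.prod_univ_eq_prod_range]
    have hbound : (Fintype.card (∀ j : Fin n, T j) : ℝ) * (2 * (placeValue b n)⁻¹) ^ (d : ℝ) ≤
        2 ^ (d : ℝ) := by
      rw [hcard, Real.mul_rpow two_pos.le (by positivity), Real.inv_rpow hq, mul_left_comm,
        ← div_eq_mul_inv]
      exact mul_le_of_le_one_right (by positivity) (div_le_one_of_le₀ hn (by positivity))
    rw [ENNReal.ofReal_rpow_of_nonneg (by positivity) d.coe_nonneg, ← ENNReal.ofReal_natCast,
      ← ENNReal.ofReal_mul (by positivity)]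
    exact ENNReal.ofReal_le_coe.2 (by exact_mod_cast hbound)

lemma fract_mem_mixedRadixSet_add (hb : ∀ j, 2 ≤ b j) (hS : ∀ j, S j ⊆ Ioo (-b j : ℤ) (b j))
    (hT : ∀ j, T j ⊆ Ioo (-b j : ℤ) (b j)) (hST : ∀ j, Ico 0 (b j : ℤ) ⊆ S j + T j) (x : ℝ) :
    Int.fract x ∈ mixedRadixSet b S + mixedRadixSet b T := by
  obtain ⟨d, hd, hsum⟩ := exists_hasSum_div_placeValue_fract hb x
  choose s hs t ht hst using fun j => mem_add.1 (hST j (hd j))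
  refine Set.mem_add.2 ⟨_, tsum_div_placeValue_mem_mixedRadixSet hs, _,
    tsum_div_placeValue_mem_mixedRadixSet ht, ?_⟩
  rw [← hsum.tsum_eq, ← (summable_div_placeValue hb fun j => hS j (hs j)).tsum_add
    (summable_div_placeValue hb fun j => hT j (ht j))]
  simp only [← hst, Int.cast_add, add_div]

end MixedRadix

section CantorSet

variable {A B : Set ℕ}

lemma zero_mem_cantorSetRestricted (A : Set ℕ) : 0 ∈ cantorSetRestricted A :=
  ⟨fun _ => 0, by simp, by simp, by simp⟩

lemma cantorSetRestricted_mono (h : A ⊆ B) : cantorSetRestricted A ⊆ cantorSetRestricted B := by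
  rintro _ ⟨a, ha, haA, rfl⟩
  exact ⟨a, ha, fun n hn => h (haA n hn), rfl⟩

lemma hasSum_two_div_three_pow (k : ℕ) :
    HasSum (fun n : ℕ => (2 : ℝ) / 3 ^ (n + k + 1)) (1 / 3 ^ k) := by
  have hgeom := (hasSum_geometric_of_lt_one (r := (1 / 3 : ℝ)) (by norm_num) (by norm_num)).mul_left
    (2 / 3 ^ (k + 1))
  have hterm (n : ℕ) : (2 : ℝ) / 3 ^ (k + 1) * (1 / 3) ^ n = 2 / 3 ^ (n + k + 1) := by
    rw [div_pow, one_pow, div_mul_div_comm, mul_one, ← pow_add]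
    ring_nf
  have hvalue : (2 : ℝ) / 3 ^ (k + 1) * (1 - 1 / 3)⁻¹ = 1 / 3 ^ k := by
    rw [pow_succ]
    field_simp
    norm_num
  rwa [hvalue, funext hterm] at hgeom

lemma summable_div_three_pow {a : ℕ → ℝ} (ha : ∀ n, a n = 0 ∨ a n = 2) :
    Summable fun n => a n / 3 ^ (n + 1) := by
  refine (hasSum_two_div_three_pow 0).summable.of_nonneg_of_le (fun n => ?_) fun n => ?_
  · rcases ha n with h | h <;> rw [h] <;> positivity
  · simp only [add_zero]
    gcongr
    rcases ha n with h | h <;> norm_num [h]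

lemma cantorSetRestricted_subset_Icc {k : ℕ} (hA : ∀ n < k, n + 1 ∉ A) :
    cantorSetRestricted A ⊆ Set.Icc 0 (1 / 3 ^ k) := by
  rintro _ ⟨a, ha, haA, rfl⟩
  have hs := summable_div_three_pow ha
  have hbounds (n : ℕ) : 0 ≤ a n ∧ a n ≤ 2 := by rcases ha n with h | h <;> norm_num [h]
  refine ⟨tsum_nonneg fun n => div_nonneg (hbounds n).1 (by positivity), ?_⟩
  have hhead : ∑ n ∈ range k, a n / 3 ^ (n + 1) = 0 := sum_eq_zero fun n hn => by
    rw [(ha n).resolve_right fun h => hA n (mem_range.1 hn) (haA n h), zero_div]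
  rw [← hs.sum_add_tsum_nat_add k, hhead, zero_add, ← (hasSum_two_div_three_pow k).tsum_eq]
  refine ((summable_nat_add_iff k).2 hs).tsum_le_tsum (fun n => ?_)
    (hasSum_two_div_three_pow k).summable
  gcongr
  exact (hbounds _).2

lemma exists_forall_sub_mem_cantorSetRestricted (A : Set ℕ) :
    ∃ m, ∀ c ∈ cantorSetRestricted A, m - c ∈ cantorSetRestricted A := by
  classical
  let top (n : ℕ) : ℝ := if n + 1 ∈ A then 2 else 0
  have htop (n : ℕ) : top n = 0 ∨ top n = 2 := (ite_eq_or_eq _ _ _).symm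
  refine ⟨∑' n, top n / 3 ^ (n + 1), ?_⟩
  rintro _ ⟨a, ha, haA, rfl⟩
  refine ⟨fun n => top n - a n, fun n => by grind, fun n hn => by grind, ?_⟩
  rw [← (summable_div_three_pow htop).tsum_sub (summable_div_three_pow ha)]
  simp only [sub_div]

lemma exists_hasSum_sum_two_div_three_pow {e : ℕ → ℕ} (he : StrictMono e) (he0 : e 0 = 0)
    {P : ℕ → Finset ℕ} (hP : ∀ j, P j ⊆ Ico (e j) (e (j + 1))) (hPA : ∀ j, ∀ n ∈ P j, n + 1 ∈ A) :
    ∃ c ∈ cantorSetRestricted A, HasSum (fun j => ∑ n ∈ P j, (2 : ℝ) / 3 ^ (n + 1)) c := by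
  classical
  let a (n : ℕ) : ℝ := if ∃ j, n ∈ P j then 2 else 0
  have ha (n : ℕ) : a n = 0 ∨ a n = 2 := (ite_eq_or_eq _ _ _).symm
  have haA (n : ℕ) (hn : a n = 2) : n + 1 ∈ A := by
    obtain ⟨j, hj⟩ : ∃ j, n ∈ P j := by
      by_contra h
      simp [a, h] at hn
    exact hPA j n hj
  refine ⟨_, ⟨a, ha, haA, rfl⟩, ?_⟩
  have hmem {j n : ℕ} (hn : n ∈ Ico (e j) (e (j + 1))) : (∃ i, n ∈ P i) ↔ n ∈ P j := by
    refine ⟨fun ⟨i, hi⟩ => ?_, fun h => ⟨j, h⟩⟩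
    have hni := hP i hi
    rw [mem_Ico] at hn hni
    have hij : i = j := le_antisymm
      (Nat.lt_succ_iff.1 (he.lt_iff_lt.1 (hni.1.trans_lt hn.2)))
      (Nat.lt_succ_iff.1 (he.lt_iff_lt.1 (hn.1.trans_lt hni.2)))
    exact hij ▸ hi
  have hblock (j : ℕ) : ∑ n ∈ Ico (e j) (e (j + 1)), a n / 3 ^ (n + 1) =
      ∑ n ∈ P j, (2 : ℝ) / 3 ^ (n + 1) := by
    rw [← sum_subset (hP j) fun n hn hnP => by simp [a, hmem hn, hnP]]
    exact sum_congr rfl fun n hn => by simp [a, hmem (hP j hn), hn]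
  have hpartial (k : ℕ) : ∑ j ∈ range k, ∑ n ∈ P j, (2 : ℝ) / 3 ^ (n + 1) =
      ∑ n ∈ range (e k), a n / 3 ^ (n + 1) := by
    induction k with
    | zero => simp [he0]
    | succ k ih =>
      rw [sum_range_succ, ih, ← hblock, sum_range_add_sum_Ico _ (he.monotone k.le_succ)]
  rw [hasSum_iff_tendsto_nat_of_nonneg fun j => by positivity]
  simp only [hpartial]
  exact (summable_div_three_pow ha).hasSum.tendsto_sum_nat.comp he.tendsto_atTop

end CantorSet

section BlockSums

/-- The integers `3 ^ M * ∑ n ∈ P, 2 / 3 ^ (n + 1)` for `P ⊆ X`: the numbers whose `M`-digit ternary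
expansion has digits `0` and `2`, the twos being confined to the positions `n + 1` with `n ∈ X`. The
truncated subtraction is harmless as long as `X ⊆ range M`. -/
def cantorBlockSums (X : Finset ℕ) (M : ℕ) : Finset ℤ :=
  X.powerset.image fun P => ∑ n ∈ P, 2 * 3 ^ (M - (n + 1))

lemma cantorBlockSums_nonempty (X : Finset ℕ) (M : ℕ) : (cantorBlockSums X M).Nonempty :=
  X.powerset_nonempty.image _

lemma injOn_sub_succ (M : ℕ) : Set.InjOn (fun n => M - (n + 1)) (range M) := by
  intro m hm n hn hmn
  simp only [coe_range, Set.mem_Iio] at hm hn hmn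
  lia

lemma sum_two_mul_three_pow_sub_succ {P : Finset ℕ} {M : ℕ} (hP : P ⊆ range M) :
    ∑ n ∈ P, (2 * 3 ^ (M - (n + 1)) : ℤ) =
      ((2 * ∑ i ∈ P.image fun n => M - (n + 1), 3 ^ i : ℕ) : ℤ) := by
  rw [sum_image ((injOn_sub_succ M).mono (coe_subset.2 hP)), mul_sum]
  push_cast
  rfl

lemma card_cantorBlockSums {X : Finset ℕ} {M : ℕ} (hX : X ⊆ range M) :
    #(cantorBlockSums X M) = 2 ^ #X := by
  rw [cantorBlockSums, card_image_of_injOn, card_powerset]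
  intro P hP Q hQ hPQ
  have hP' := (mem_powerset.1 hP).trans hX
  have hQ' := (mem_powerset.1 hQ).trans hX
  dsimp only at hPQ
  rw [sum_two_mul_three_pow_sub_succ hP', sum_two_mul_three_pow_sub_succ hQ'] at hPQ
  refine image_injOn_powerset_of_injOn (injOn_sub_succ M) (mem_powerset.2 hP')
    (mem_powerset.2 hQ') (geomSum_injective (n := 3) (by norm_num) ?_)
  exact Nat.eq_of_mul_eq_mul_left two_pos (by exact_mod_cast hPQ)

lemma cantorBlockSums_subset_Ico {X : Finset ℕ} {N L : ℕ} (hX : X ⊆ Ico N (N + L)) :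
    cantorBlockSums X (N + L) ⊆ Ico 0 ((3 ^ L : ℕ) : ℤ) := by
  intro s hs
  obtain ⟨P, hP, rfl⟩ := mem_image.1 hs
  have hPX := (mem_powerset.1 hP).trans hX
  have hrange : (P.image fun n => N + L - (n + 1)) ⊆ range L := by
    refine image_subset_iff.2 fun n hn => mem_range.2 ?_
    have := mem_Ico.1 (hPX hn)
    lia
  rw [sum_two_mul_three_pow_sub_succ fun n hn => mem_range.2 (mem_Ico.1 (hPX hn)).2, mem_Ico,
    Nat.cast_lt]
  refine ⟨by positivity, ?_⟩
  calc 2 * ∑ i ∈ P.image fun n => N + L - (n + 1), 3 ^ i ≤ 2 * ∑ i ∈ range L, 3 ^ i := by gcongr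
    _ < 3 ^ L := by linarith [show (∑ i ∈ range L, 3 ^ i) * 2 + 1 = 3 ^ L from geom_sum_mul_add 2 L]

lemma placeValue_pow {e L : ℕ → ℕ} (he₀ : e 0 = 0) (he : ∀ j, e (j + 1) = e j + L j) (q n : ℕ) :
    placeValue (fun j => q ^ L j) n = (q : ℝ) ^ e n := by
  induction n with
  | zero => simp [placeValue, he₀]
  | succ n ih => rw [placeValue_succ, ih, he, pow_add, Nat.cast_pow]

lemma mixedRadixSet_cantorBlockSums_subset {e L : ℕ → ℕ} (he₀ : e 0 = 0)
    (he : ∀ j, e (j + 1) = e j + L j) (hL : ∀ j, 0 < L j) {A : Set ℕ} {X : ℕ → Finset ℕ}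
    (hX : ∀ j, X j ⊆ Ico (e j) (e j + L j)) (hXA : ∀ j, ∀ n ∈ X j, n + 1 ∈ A) :
    mixedRadixSet (fun j => 3 ^ L j) (fun j => cantorBlockSums (X j) (e j + L j)) ⊆
      cantorSetRestricted A := by
  rintro _ ⟨s, rfl⟩
  choose P hP hPs using fun j => mem_image.1 (s j).2
  have hPX (j : ℕ) : P j ⊆ X j := mem_powerset.1 (hP j)
  simp only [← he] at hX hPs
  have he_mono : StrictMono e := strictMono_nat_of_lt_succ fun j => by
    rw [he]
    exact Nat.lt_add_of_pos_right (hL j)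
  obtain ⟨c, hc, hsum⟩ := exists_hasSum_sum_two_div_three_pow he_mono he₀
    (fun j => (hPX j).trans (hX j)) fun j n hn => hXA j n (hPX j hn)
  have hterm (j : ℕ) : ((s j : ℤ) : ℝ) / placeValue (fun j => 3 ^ L j) (j + 1) =
      ∑ n ∈ P j, (2 : ℝ) / 3 ^ (n + 1) := by
    rw [← hPs, placeValue_pow he₀ he, Int.cast_sum, sum_div]
    refine sum_congr rfl fun n hn => ?_
    have hn : n + 1 ≤ e (j + 1) := (mem_Ico.1 (hX j (hPX j hn))).2
    push_cast
    rw [pow_sub₀ _ three_ne_zero hn]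
    field_simp
  simpa only [hterm, hsum.tsum_eq] using hc

lemma rpow_le_mul_card_cantorBlockSums {α C D : ℝ} (hD : (2 : ℝ) ^ D = 3 ^ (1 - α))
    {X : Finset ℕ} {M L : ℕ} (hX : X ⊆ range M) (hcard : D * L ≤ #X + C) :
    (3 ^ L : ℝ) ^ (1 - α) ≤ 2 ^ C * #(cantorBlockSums X M) := by
  rw [card_cantorBlockSums hX]
  calc (3 ^ L : ℝ) ^ (1 - α) = 2 ^ (D * L) := by
        rw [Real.rpow_mul two_pos.le, hD, Real.rpow_natCast, Real.rpow_pow_comm three_pos.le]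
    _ ≤ 2 ^ (C + #X) := Real.rpow_le_rpow_of_exponent_le one_le_two (by linarith)
    _ = 2 ^ C * (2 ^ #X : ℕ) := by rw [Real.rpow_add two_pos, Real.rpow_natCast]; norm_cast

lemma exists_card_le_Ico_subset_cantorBlockSums_add {α C D : ℝ}
    (hD : (2 : ℝ) ^ D = 3 ^ (1 - α)) {X : Finset ℕ} {N L : ℕ} (hX : X ⊆ Ico N (N + L))
    (hcard : D * L ≤ #X + C) :
    ∃ T ⊆ Ioo (-(3 ^ L : ℕ) : ℤ) (3 ^ L : ℕ), (#T : ℝ) ≤ 2 ^ C * (4 * L + 1) * (3 ^ L) ^ α ∧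
      Ico 0 ((3 ^ L : ℕ) : ℤ) ⊆ cantorBlockSums X (N + L) + T := by
  obtain ⟨T, hTsub, hT, hcover⟩ := exists_card_mul_card_le_Ico_subset_add
    (cantorBlockSums_nonempty X (N + L)) (cantorBlockSums_subset_Ico hX)
  refine ⟨T, hTsub, ?_, hcover⟩
  have hlog : Real.log (3 ^ L : ℕ) ≤ 2 * L := by
    push_cast
    rw [Real.log_pow]
    nlinarith [Real.log_le_sub_one_of_pos (three_pos (α := ℝ)), (Nat.cast_nonneg L : (0 : ℝ) ≤ L)]
  have hcardS : (3 ^ L : ℝ) ^ (1 - α) ≤ 2 ^ C * #(cantorBlockSums X (N + L)) :=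
    rpow_le_mul_card_cantorBlockSums hD (fun n hn => mem_range.2 (mem_Ico.1 (hX hn)).2) hcard
  have hpos : (0 : ℝ) < (3 ^ L) ^ (1 - α) := by positivity
  refine le_of_mul_le_mul_right ?_ hpos
  calc (#T : ℝ) * (3 ^ L) ^ (1 - α) ≤ #T * (2 ^ C * #(cantorBlockSums X (N + L))) := by gcongr
    _ = 2 ^ C * (#T * #(cantorBlockSums X (N + L))) := by ring
    _ ≤ 2 ^ C * ((3 ^ L : ℕ) * (2 * Real.log (3 ^ L : ℕ) + 1)) := by gcongr
    _ ≤ 2 ^ C * ((3 ^ L : ℕ) * (2 * (2 * L) + 1)) := by gcongr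
    _ = 2 ^ C * (4 * L + 1) * (3 ^ L) := by push_cast; ring
    _ = 2 ^ C * (4 * L + 1) * (3 ^ L) ^ α * (3 ^ L) ^ (1 - α) := by
        rw [mul_assoc _ (_ ^ α), ← Real.rpow_add (by positivity), add_sub_cancel, Real.rpow_one]

end BlockSums

lemma eventually_mul_pow_le_pow_sq_rpow {c q ε : ℝ} (hc : 0 ≤ c) (hq : 1 < q) (hε : 0 < ε) :
    ∀ᶠ n : ℕ in atTop, (c * n) ^ n ≤ (q ^ n ^ 2) ^ ε := by
  have hlim : Tendsto (fun n : ℕ => c * (n * ((q ^ ε)⁻¹) ^ n)) atTop (𝓝 0) := by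
    have habs : |(q ^ ε)⁻¹| < 1 := by
      rw [abs_of_pos (by positivity)]
      exact inv_lt_one_of_one_lt₀ (Real.one_lt_rpow hq hε)
    simpa using (tendsto_self_mul_const_pow_of_abs_lt_one habs).const_mul c
  filter_upwards [hlim.eventually_le_const one_pos] with n hn
  have hle : c * n ≤ (q ^ ε) ^ n := by
    rwa [inv_pow, ← mul_assoc, ← div_eq_mul_inv, div_le_one (by positivity)] at hn
  calc (c * n) ^ n ≤ ((q ^ ε) ^ n) ^ n := by gcongr
    _ = (q ^ n ^ 2) ^ ε := by
        rw [← pow_mul, ← pow_two, Real.rpow_pow_comm (by positivity)]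

section Density

/-- Up to a bounded error, every window of `L` consecutive integers contains at least `D * L`
elements of `A`. -/
def HasUniformLowerDensity (A : Set ℕ) (D : ℝ) : Prop :=
  ∃ C : ℝ, ∀ N L : ℕ, D * L ≤ (A ∩ Set.Ioc N (N + L)).ncard + C

variable {A : Set ℕ} {D : ℝ}

lemma HasUniformLowerDensity.inter_Ioi (hA : HasUniformLowerDensity A D) (k : ℕ) :
    HasUniformLowerDensity (A ∩ Set.Ioi k) D := by
  obtain ⟨C, hC⟩ := hA
  refine ⟨k + C, fun N L => (hC N L).trans ?_⟩
  have hsub : A ∩ Set.Ioc N (N + L) ⊆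
      (A ∩ Set.Ioi k ∩ Set.Ioc N (N + L)) ∪ Set.Ioc 0 k := by
    rintro n ⟨hn, hN, hL⟩
    rcases lt_or_ge k n with hkn | hkn
    · exact .inl ⟨⟨hn, hkn⟩, hN, hL⟩
    · exact .inr ⟨N.zero_le.trans_lt hN, hkn⟩
  have hcard : (A ∩ Set.Ioc N (N + L)).ncard ≤
      (A ∩ Set.Ioi k ∩ Set.Ioc N (N + L)).ncard + k :=
    calc (A ∩ Set.Ioc N (N + L)).ncard
        ≤ ((A ∩ Set.Ioi k ∩ Set.Ioc N (N + L)) ∪ Set.Ioc 0 k).ncard :=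
          Set.ncard_le_ncard hsub
            (((Set.finite_Ioc _ _).inter_of_right _).union (Set.finite_Ioc _ _))
      _ ≤ (A ∩ Set.Ioi k ∩ Set.Ioc N (N + L)).ncard + (Set.Ioc 0 k).ncard :=
          Set.ncard_union_le _ _
      _ = (A ∩ Set.Ioi k ∩ Set.Ioc N (N + L)).ncard + k := by
          rw [← coe_Ioc 0 k, Set.ncard_coe_finset, Nat.card_Ioc, Nat.sub_zero]
  rw [← add_assoc]
  gcongr
  exact_mod_cast hcard

lemma ncard_inter_Ioc_eq_card_filter (A : Set ℕ) [DecidablePred (· ∈ A)] (N M : ℕ) :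
    (A ∩ Set.Ioc N M).ncard = #{n ∈ Ico N M | n + 1 ∈ A} := by
  have himage : A ∩ Set.Ioc N M = Nat.succ '' ({n ∈ Ico N M | n + 1 ∈ A} : Finset ℕ) := by
    ext m
    cases m <;> simp [and_comm]
  rw [himage, Set.ncard_image_of_injective _ Nat.succ_injective, Set.ncard_coe_finset]

end Density

lemma eventually_prod_le_placeValue_rpow {b : ℕ → ℕ} {q : ℝ} (hq : 1 < q)
    (hb : ∀ n, placeValue b n = q ^ n ^ 2) {t : ℕ → ℝ} (ht₀ : ∀ j, 0 ≤ t j) {c α d : ℝ}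
    (hc : 0 ≤ c) (ht : ∀ j, t j ≤ c * (j + 1) * (b j : ℝ) ^ α) (hd : α < d) :
    ∀ᶠ n in atTop, ∏ j ∈ range n, t j ≤ placeValue b n ^ d := by
  filter_upwards [eventually_mul_pow_le_pow_sq_rpow hc hq (sub_pos.2 hd)] with n hn
  have hpos : 0 < placeValue b n := by rw [hb]; positivity
  calc ∏ j ∈ range n, t j ≤ ∏ j ∈ range n, c * n * (b j : ℝ) ^ α := by
        refine prod_le_prod (fun j _ => ht₀ j) fun j hj => (ht j).trans ?_
        gcongr
        exact_mod_cast mem_range.1 hj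
    _ = (c * n) ^ n * placeValue b n ^ α := by
        rw [prod_mul_distrib, prod_const, card_range,
          Real.finsetProd_rpow _ _ fun j _ => (b j).cast_nonneg, placeValue]
    _ ≤ placeValue b n ^ (d - α) * placeValue b n ^ α := by
        rw [← hb] at hn
        gcongr
    _ = placeValue b n ^ d := by rw [← Real.rpow_add hpos, sub_add_cancel]

section Complement

variable {A : Set ℕ} {α D : ℝ}

lemma exists_isCompact_fract_mem_cantorSetRestricted_add (hD : (2 : ℝ) ^ D = 3 ^ (1 - α))
    (hA : HasUniformLowerDensity A D) :
    ∃ K : Set ℝ, IsCompact K ∧ dimH K ≤ ENNReal.ofReal α ∧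
      ∀ x : ℝ, Int.fract x ∈ cantorSetRestricted A + K := by
  classical
  obtain ⟨C, hC⟩ := hA
  have hsq (j : ℕ) : (j + 1) ^ 2 = j ^ 2 + (2 * j + 1) := by ring
  let X (j : ℕ) : Finset ℕ := {n ∈ Ico (j ^ 2) (j ^ 2 + (2 * j + 1)) | n + 1 ∈ A}
  have hX (j : ℕ) : X j ⊆ Ico (j ^ 2) (j ^ 2 + (2 * j + 1)) := filter_subset _ _
  have hXA := mixedRadixSet_cantorBlockSums_subset (by simp) hsq (by simp) hX
    fun j n hn => (mem_filter.1 hn).2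
  choose T hTsub hT hcover using fun j =>
    exists_card_le_Ico_subset_cantorBlockSums_add hD (hX j)
      ((hC (j ^ 2) (2 * j + 1)).trans_eq (by rw [ncard_inter_Ioc_eq_card_filter]))
  have hb (j : ℕ) : 2 ≤ 3 ^ (2 * j + 1) :=
    (by norm_num : 2 ≤ 3).trans (Nat.le_self_pow (by simp) 3)
  refine ⟨mixedRadixSet (fun j => 3 ^ (2 * j + 1)) T, isCompact_mixedRadixSet hb hTsub,
    dimH_mixedRadixSet_le hb hTsub fun d hd => ?_, fun x => ?_⟩
  · refine eventually_prod_le_placeValue_rpow (q := 3) (c := 2 ^ C * 8) (by norm_num)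
      (placeValue_pow (by simp) hsq 3) (fun j => Nat.cast_nonneg _) (by positivity)
      (fun j => (hT j).trans ?_) hd
    rw [Nat.cast_pow, Nat.cast_ofNat, mul_assoc (2 ^ C : ℝ) 8]
    gcongr
    push_cast
    linarith
  · refine Set.add_subset_add_right hXA
      (fract_mem_mixedRadixSet_add hb (fun j => ?_) hTsub hcover x)
    refine (cantorBlockSums_subset_Ico (hX j)).trans fun s hs => mem_Ioo.2 ?_
    have := mem_Ico.1 hs
    have := hb j
    lia

lemma dimH_add_le_of_countable {E : Type*} [NormedAddCommGroup E] (s : Set E) {t : Set E}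
    (ht : t.Countable) : dimH (s + t) ≤ dimH s := by
  rw [← Set.iUnion_add_right_image, dimH_bUnion ht]
  exact iSup₂_le fun a _ => ((IsometryEquiv.addRight a).dimH_image s).le

lemma exists_isClosed_cantorSetRestricted_add_eq_univ (hD : (2 : ℝ) ^ D = 3 ^ (1 - α))
    (hA : HasUniformLowerDensity A D) :
    ∃ F : Set ℝ, IsClosed F ∧ dimH F ≤ ENNReal.ofReal α ∧
      cantorSetRestricted A + F = Set.univ := by
  obtain ⟨K, hK, hdim, hfract⟩ := exists_isCompact_fract_mem_cantorSetRestricted_add hD hA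
  refine ⟨K + Set.range ((↑) : ℤ → ℝ),
    Int.isClosedEmbedding_coe_real.isClosed_range.add_left_of_isCompact hK,
    (dimH_add_le_of_countable K (Set.countable_range _)).trans hdim,
    Set.eq_univ_of_forall fun x => ?_⟩
  rw [← add_assoc, ← Int.fract_add_floor x]
  exact Set.add_mem_add (hfract x) ⟨⌊x⌋, rfl⟩

end Complement

section Localization

lemma isClosed_insert_iUnion_of_subset_closedBall {X : Type*} [MetricSpace X] {x : X}
    {F : ℕ → Set X} (hF : ∀ n, IsClosed (F n)) {r : ℕ → ℝ} (hr : Antitone r)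
    (hr₀ : Tendsto r atTop (𝓝 0)) (hFr : ∀ n, F n ⊆ Metric.closedBall x (r n)) :
    IsClosed (insert x (⋃ n, F n)) := by
  have heq : insert x (⋃ n, F n) = ⋂ N, (Metric.closedBall x (r N) ∪ ⋃ n < N, F n) := by
    ext y
    simp only [Set.mem_insert_iff, Set.mem_iUnion, Set.mem_iInter, Set.mem_union, exists_prop]
    constructor
    · rintro (rfl | ⟨n, hn⟩) N
      · exact .inl (Metric.mem_closedBall_self (hr.le_of_tendsto hr₀ N))
      · rcases lt_or_ge n N with hnN | hNn
        · exact .inr ⟨n, hnN, hn⟩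
        · exact .inl (Metric.closedBall_subset_closedBall (hr hNn) (hFr n hn))
    · refine fun h => or_iff_not_imp_left.2 fun hyx => ?_
      obtain ⟨N, hN⟩ := (hr₀.eventually_lt_const (dist_pos.2 hyx)).exists
      obtain ⟨n, -, hn⟩ := (h N).resolve_left hN.not_ge
      exact ⟨n, hn⟩
  rw [heq]
  exact isClosed_iInter fun N => Metric.isClosed_closedBall.union
    ((Set.finite_lt_nat N).isClosed_biUnion fun n _ => hF n)

-- On the scale `(1 / 2) ^ (n + 1) < x ≤ (1 / 2) ^ n` only the part of `C` below `x` is used, which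
-- keeps the second summand in `[0, 1]`.
lemma exists_isClosed_Icc_subset_add {C : Set ℝ} (hC : 0 ∈ C) {s : ℝ≥0∞}
    (h : ∀ ε > 0, ∃ F : Set ℝ, IsClosed F ∧ dimH F ≤ s ∧ C ∩ Set.Icc 0 ε + F = Set.univ) :
    ∃ E ⊆ Set.Icc (0 : ℝ) 1, IsClosed E ∧ dimH E ≤ s ∧ Set.Icc 0 1 ⊆ C + E := by
  choose F hFclosed hFdim hF using fun n : ℕ => h ((1 / 2) ^ (n + 1)) (by positivity)
  set G : ℕ → Set ℝ := fun n => F n ∩ Set.Icc 0 ((1 / 2) ^ n)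
  refine ⟨insert 0 (⋃ n, G n), ?_, ?_, ?_, fun x hx => ?_⟩
  · refine Set.insert_subset (by simp) (Set.iUnion_subset fun n y hy => ⟨hy.2.1, hy.2.2.trans ?_⟩)
    exact pow_le_one₀ (by norm_num) (by norm_num)
  · refine isClosed_insert_iUnion_of_subset_closedBall (r := fun n => (1 / 2) ^ n)
      (fun n => (hFclosed n).inter isClosed_Icc)
      (pow_right_anti₀ (by norm_num) (by norm_num))
      (tendsto_pow_atTop_nhds_zero_of_lt_one (by norm_num) (by norm_num)) fun n y hy => ?_
    rw [Metric.mem_closedBall, Real.dist_0_eq_abs, abs_of_nonneg hy.2.1]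
    exact hy.2.2
  · rw [Set.insert_eq, dimH_union, dimH_singleton, dimH_iUnion, zero_max]
    exact iSup_le fun n => (dimH_mono Set.inter_subset_left).trans (hFdim n)
  · rcases hx.1.eq_or_lt with rfl | hx₀
    · exact Set.mem_add.2 ⟨0, hC, 0, Set.mem_insert _ _, add_zero 0⟩
    obtain ⟨n, hn, hn'⟩ := exists_nat_pow_near_of_lt_one (y := (1 / 2 : ℝ)) hx₀ hx.2 (by norm_num)
      (by norm_num)
    obtain ⟨c, ⟨hc, hc₀, hcn⟩, f, hf, rfl⟩ := Set.mem_add.1 ((hF n).ge (Set.mem_univ x))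
    exact Set.add_mem_add hc (.inr (Set.mem_iUnion.2 ⟨n, hf, by linarith, by linarith⟩))

lemma exists_isClosed_add_eq_Icc_zero_two {C E : Set ℝ} {m : ℝ} (hC : C ⊆ Set.Icc 0 1)
    (hm : ∀ c ∈ C, m - c ∈ C) (hE : E ⊆ Set.Icc 0 1) (hEclosed : IsClosed E)
    (hCE : Set.Icc 0 1 ⊆ C + E) :
    ∃ E' : Set ℝ, IsClosed E' ∧ C + E' = Set.Icc 0 2 ∧ dimH E' = dimH E := by
  let σ : ℝ ≃ᵢ ℝ := IsometryEquiv.subLeft (2 - m)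
  refine ⟨E ∪ σ '' E, hEclosed.union (σ.toHomeomorph.isClosedMap E hEclosed),
    Set.Subset.antisymm ?_ fun x hx => ?_, by rw [dimH_union, σ.dimH_image, max_self]⟩
  · rintro _ ⟨c, hc, y, hy | ⟨y, hy, rfl⟩, rfl⟩
    · have := hC hc
      have := hE hy
      simp only [Set.mem_Icc] at *
      constructor <;> linarith
    · have := hC (hm c hc)
      have := hE hy
      simp only [Set.mem_Icc, σ, IsometryEquiv.subLeft_apply] at *
      constructor <;> linarith
  · rcases le_total x 1 with hx₁ | hx₁
    · exact Set.add_subset_add_left Set.subset_union_left (hCE ⟨hx.1, hx₁⟩)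
    · obtain ⟨c, hc, y, hy, hcy⟩ := Set.mem_add.1
        (hCE (show 2 - x ∈ Set.Icc 0 1 from ⟨by linarith [hx.2], by linarith⟩))
      refine Set.mem_add.2 ⟨m - c, hm c hc, σ y, .inr ⟨y, hy, rfl⟩, ?_⟩
      simp only [σ, IsometryEquiv.subLeft_apply]
      linarith

end Localization

lemma two_rpow_eq_three_rpow_one_sub {α D : ℝ} (hD : D = (1 - α) / (Real.log 2 / Real.log 3)) :
    (2 : ℝ) ^ D = 3 ^ (1 - α) := by
  have hlog : Real.log 2 ≠ 0 := (Real.log_pos one_lt_two).ne'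
  rw [Real.rpow_def_of_pos two_pos, Real.rpow_def_of_pos three_pos, hD]
  field_simp

theorem exists_closed_complement_for_cantorSetRestricted_general {α D : ℝ}
    (hD : D = (1 - α) / (Real.log 2 / Real.log 3)) {A : Set ℕ}
    (hA : HasUniformLowerDensity A D) :
    ∃ E : Set ℝ, IsClosed E ∧ cantorSetRestricted A + E = Set.Icc (0 : ℝ) 2 ∧
      dimH E ≤ ENNReal.ofReal α := by
  obtain ⟨E, hE, hEclosed, hEdim, hcover⟩ := exists_isClosed_Icc_subset_add (s := ENNReal.ofReal α)
    (zero_mem_cantorSetRestricted A) fun ε hε => by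
      obtain ⟨k, hk⟩ := exists_pow_lt_of_lt_one hε (by norm_num : (1 / 3 : ℝ) < 1)
      obtain ⟨F, hF, hFdim, hFcover⟩ := exists_isClosed_cantorSetRestricted_add_eq_univ
        (two_rpow_eq_three_rpow_one_sub hD) (hA.inter_Ioi k)
      have htail : cantorSetRestricted (A ∩ Set.Ioi k) ⊆ Set.Icc 0 (1 / 3 ^ k) :=
        cantorSetRestricted_subset_Icc fun n hn h => (Nat.lt_succ_iff.1 h.2).not_gt hn
      refine ⟨F, hF, hFdim, Set.univ_subset_iff.1 (hFcover.ge.trans ?_)⟩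
      refine Set.add_subset_add_right fun c hc =>
        ⟨cantorSetRestricted_mono Set.inter_subset_left hc, (htail hc).1, (htail hc).2.trans ?_⟩
      rw [← one_div_pow]
      exact hk.le
  obtain ⟨m, hm⟩ := exists_forall_sub_mem_cantorSetRestricted A
  obtain ⟨E', hE', hsum, hdim⟩ := exists_isClosed_add_eq_Icc_zero_two
    (by simpa using cantorSetRestricted_subset_Icc (A := A) (k := 0) (by simp)) hm hE hEclosed
    hcover
  exact ⟨E', hE', hsum, hdim.trans_le hEdim⟩

lemma strictMono_floor_div {D : ℝ} (hD₀ : 0 < D) (hD₁ : D ≤ 1) :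
    StrictMono fun y : ℕ => ⌊(y : ℝ) / D⌋₊ := by
  refine strictMono_nat_of_lt_succ fun y => Nat.lt_of_succ_le (Nat.le_floor ?_)
  have hfloor : (⌊(y : ℝ) / D⌋₊ : ℝ) ≤ y / D := Nat.floor_le (by positivity)
  have hstep : 1 ≤ 1 / D := (one_le_div hD₀).2 hD₁
  push_cast
  rw [add_div]
  linarith

lemma hasUniformLowerDensity_floor_div {D : ℝ} (hD₀ : 0 < D) (hD₁ : D ≤ 1) :
    HasUniformLowerDensity {m : ℕ | ∃ y : ℕ, 0 < y ∧ (m : ℤ) = ⌊(y : ℝ) / D⌋} D := by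
  refine ⟨1, fun N L => ?_⟩
  set A := {m : ℕ | ∃ y : ℕ, 0 < y ∧ (m : ℤ) = ⌊(y : ℝ) / D⌋}
  set lo := ⌈D * (N + 1)⌉₊
  set hi := ⌈D * (N + L + 1)⌉₊
  have hsub : (fun y : ℕ => ⌊(y : ℝ) / D⌋₊) '' Ico lo hi ⊆ A ∩ Set.Ioc N (N + L) := by
    rintro _ ⟨y, hy, rfl⟩
    have hylo : D * (N + 1) ≤ y := Nat.ceil_le.1 (mem_Ico.1 hy).1
    have hyhi : y < D * (N + L + 1) := Nat.lt_ceil.1 (mem_Ico.1 hy).2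
    refine ⟨⟨y, ?_, Int.natCast_floor_eq_floor (by positivity)⟩, ?_, ?_⟩
    · exact_mod_cast (by positivity : 0 < D * (N + 1)).trans_le hylo
    · refine Nat.lt_of_succ_le (Nat.le_floor ?_)
      rw [le_div_iff₀' hD₀]
      exact_mod_cast hylo
    · refine Nat.lt_succ_iff.1 ((Nat.floor_lt (by positivity)).2 ?_)
      rw [div_lt_iff₀' hD₀]
      exact_mod_cast hyhi
  have hcard : hi - lo ≤ (A ∩ Set.Ioc N (N + L)).ncard := by
    have := Set.ncard_le_ncard hsub ((Set.finite_Ioc _ _).inter_of_right _)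
    rwa [Set.ncard_image_of_injective _ (strictMono_floor_div hD₀ hD₁).injective,
      Set.ncard_coe_finset, Nat.card_Ico] at this
  have hlo : (lo : ℝ) < D * (N + 1) + 1 := Nat.ceil_lt_add_one (by positivity)
  have hhi : D * (N + L + 1) ≤ hi := Nat.le_ceil _
  have hcard' : (hi : ℝ) ≤ (A ∩ Set.Ioc N (N + L)).ncard + lo := by
    exact_mod_cast tsub_le_iff_right.1 hcard
  linarith

/-- Let `1 − log 2/log 3 ≤ α < 1`, `D = (1 − α)/(log 2/log 3)`, and
`A = {⌊y/D⌋ : y a positive integer}`.  Then there is a closed set `E ⊆ ℝ` with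
`𝒞_A + E = [0,2]` and `dim_H E ≤ α`. -/
theorem exists_closed_complement_for_cantorSetRestricted (α : ℝ)
    (hα₁ : 1 - Real.log 2 / Real.log 3 ≤ α) (hα₂ : α < 1)
    (D : ℝ) (hD : D = (1 - α) / (Real.log 2 / Real.log 3))
    (A : Set ℕ) (hA : A = {m : ℕ | ∃ y : ℕ, 0 < y ∧ (m : ℤ) = ⌊(y : ℝ) / D⌋}) :
    ∃ E : Set ℝ, IsClosed E ∧ cantorSetRestricted A + E = Set.Icc (0 : ℝ) 2 ∧
      dimH E ≤ ENNReal.ofReal α := by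
  have hlog : 0 < Real.log 2 / Real.log 3 := by positivity
  have hD₀ : 0 < D := hD ▸ div_pos (sub_pos.2 hα₂) hlog
  have hD₁ : D ≤ 1 := hD ▸ (div_le_one hlog).2 (by linarith)
  exact exists_closed_complement_for_cantorSetRestricted_general hD
    (hA ▸ hasUniformLowerDensity_floor_div hD₀ hD₁)
end

section
/- Let α be a real number with 1 − log 2/log 3 ≤ α < 1, let D = (1 − α)/(log 2/log 3), and let A = {⌊y/D⌋ : y a positive integer}. Then every set E ⊆ ℝ satisfying 𝒞_A + E ⊇ [0,2] has Hausdorff dimension at least α. -/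
open scoped Pointwise

/-!
If `C` is covered by `O(r ^ (-β))` balls of every radius `r ≤ 1`, then the outer measure
`S ↦ μ (C + S)` gives a ball of radius `r` mass `O(r ^ (dim V - β))`. When `C + E` is not a null
set this outer measure charges `E`, so the mass distribution principle yields
`dim_H E ≥ dim V - β`.

For `C = 𝒞_A ⊆ ℝ`, there are at most `D * (n + 1)` elements of `A` in `[1, n]`, hence at most
`2 ^ (D * (n + 1))` choices for the first `n` ternary digits of a point of `𝒞_A`. This is the
covering bound with `β = D * log 2 / log 3 = 1 - α`.
-/

open MeasureTheory Metric Module Set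
open scoped ENNReal Finset NNReal Topology

section MassDistribution

variable {X : Type*} [EMetricSpace X] {μ : OuterMeasure X} {K : ℝ≥0∞} {d : ℝ}

lemma outerMeasure_le_mul_ediam_rpow (hK : K ≠ ∞)
    (hμ : ∀ x, ∀ r : ℝ≥0, 0 < r → r ≤ 1 → μ (closedEBall x r) ≤ K * r ^ d)
    {s : Set X} (hs : ediam s < 1) : μ s ≤ K * ediam s ^ d := by
  obtain rfl | ⟨x, hx⟩ := s.eq_empty_or_nonempty
  · simp
  -- Since `ediam s` may be `0`, the bound is a limit over radii decreasing to `ediam s`.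
  have : (𝓝[>] ediam s).NeBot := nhdsGT_neBot_of_exists_gt ⟨1, hs⟩
  have rpow_tendsto : Filter.Tendsto (fun r : ℝ≥0∞ ↦ K * r ^ d) (𝓝[>] ediam s)
      (𝓝 (K * ediam s ^ d)) :=
    ENNReal.Tendsto.const_mul
      (ENNReal.continuous_rpow_const.continuousAt.tendsto.mono_left nhdsWithin_le_nhds) (.inr hK)
  refine ge_of_tendsto rpow_tendsto ?_
  filter_upwards [Ioo_mem_nhdsGT hs] with r ⟨hsr, hr1⟩
  lift r to ℝ≥0 using hr1.ne_top
  have subset_ball : s ⊆ closedEBall x r := fun y hy ↦ (edist_le_ediam_of_mem hy hx).trans hsr.le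
  exact (measure_mono subset_ball).trans
    (hμ x r (ENNReal.coe_pos.mp (bot_le.trans_lt hsr)) (mod_cast hr1.le))

theorem ofReal_le_dimH_of_outerMeasure_closedEBall_le (hK : K ≠ ∞)
    (hμ : ∀ x, ∀ r : ℝ≥0, 0 < r → r ≤ 1 → μ (closedEBall x r) ≤ K * r ^ d)
    {E : Set X} (hE : μ E ≠ 0) : ENNReal.ofReal d ≤ dimH E := by
  obtain hd | hd := le_total d 0
  · simp [ENNReal.ofReal_of_nonpos hd]
  borelize X
  have le_hausdorff : K⁻¹ • μ ≤ OuterMeasure.mkMetric (fun r ↦ r ^ d) := by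
    refine OuterMeasure.le_mkMetric _ _ 2⁻¹ (by simp) fun s hs ↦ ?_
    have bound := outerMeasure_le_mul_ediam_rpow hK hμ (hs.trans_lt (by simp))
    simpa [div_eq_mul_inv, mul_comm] using ENNReal.div_le_of_le_mul' bound
  have hausdorff_ne_zero : μH[(d.toNNReal : ℝ)] E ≠ 0 := by
    rw [Real.coe_toNNReal d hd, Measure.hausdorffMeasure, ← OuterMeasure.coe_mkMetric]
    have scaled_ne_zero : K⁻¹ * μ E ≠ 0 := mul_ne_zero (ENNReal.inv_ne_zero.mpr hK) hE
    exact ((pos_iff_ne_zero.mpr scaled_ne_zero).trans_le (le_hausdorff E)).ne'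
  exact le_dimH_of_hausdorffMeasure_ne_zero hausdorff_ne_zero

end MassDistribution

section Sumset

/-- The outer measure `S ↦ μ (C + S)`, the mass distribution used to bound from below the dimension
of the sets that `C` completes to a sumset of positive measure. -/
def sumsetOuterMeasure {G : Type*} [Add G] (μ : OuterMeasure G) (C : Set G) : OuterMeasure G where
  measureOf s := μ (C + s)
  empty := by simp
  mono h := measure_mono (add_subset_add_left h)
  iUnion_nat s _ := by
    rw [add_iUnion]
    exact measure_iUnion_le _

lemma measure_add_closedBall_le {G : Type*} [SeminormedAddCommGroup G] [MeasurableSpace G]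
    [MeasurableAdd G] (μ : Measure G) [μ.IsAddLeftInvariant] {C : Set G} {r : ℝ≥0}
    (hC : coveringNumber r C ≠ ⊤) (x : G) :
    μ (C + closedBall x r) ≤ coveringNumber r C * μ (closedBall 0 (2 * r)) := by
  have finite : (minimalCover r C).Finite := finite_minimalCover
  have subset_iUnion : C + closedBall x r ⊆
      ⋃ t ∈ finite.toFinset, closedBall (t + x) (2 * r) := by
    rintro _ ⟨c, hc, y, hy, rfl⟩
    obtain ⟨t, ht, hct⟩ :=
      mem_iUnion₂.mp ((isCover_minimalCover hC).subset_iUnion_closedBall hc)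
    refine mem_iUnion₂.mpr ⟨t, finite.mem_toFinset.mpr ht, ?_⟩
    simpa [two_mul] using (dist_add_add_le c y t x).trans (add_le_add hct hy)
  have measure_translate (t : G) : μ (closedBall (t + x) (2 * r)) = μ (closedBall 0 (2 * r)) := by
    simpa [add_comm t x] using measure_preimage_add μ (-(t + x)) (closedBall 0 (2 * r))
  calc μ (C + closedBall x r)
      ≤ ∑ t ∈ finite.toFinset, μ (closedBall (t + x) (2 * r)) :=
        (measure_mono subset_iUnion).trans (measure_biUnion_finset_le _ _)
    _ = coveringNumber r C * μ (closedBall 0 (2 * r)) := by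
        simp [measure_translate, ← encard_minimalCover hC, finite.encard_eq_coe_toFinset_card]

theorem ofReal_finrank_sub_le_dimH_of_coveringNumber_le {V : Type*} [NormedAddCommGroup V]
    [NormedSpace ℝ V] [FiniteDimensional ℝ V] [MeasurableSpace V] [BorelSpace V] (μ : Measure V)
    [μ.IsAddHaarMeasure] {C E : Set V} {K : ℝ≥0∞} {β : ℝ} (hK : K ≠ ∞)
    (hC : ∀ r : ℝ≥0, 0 < r → r ≤ 1 → (coveringNumber r C : ℝ≥0∞) ≤ K * r ^ (-β))
    (hE : μ (C + E) ≠ 0) : ENNReal.ofReal (finrank ℝ V - β) ≤ dimH E := by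
  set ν := sumsetOuterMeasure μ.toOuterMeasure C
  set unitMass := μ (closedBall (0 : V) 1)
  have unitMass_ne_top : unitMass ≠ ∞ := measure_closedBall_lt_top.ne
  refine ofReal_le_dimH_of_outerMeasure_closedEBall_le (μ := ν)
    (K := K * 2 ^ finrank ℝ V * unitMass) (by finiteness) (fun x r hr hr1 ↦ ?_) hE
  have hr0 : (r : ℝ≥0∞) ≠ 0 := by simpa using hr.ne'
  have covering_ne_top : coveringNumber r C ≠ ⊤ := by
    have bound_ne_top : K * (r : ℝ≥0∞) ^ (-β) ≠ ∞ := by finiteness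
    exact ENat.toENNReal_ne_top.mp (ne_top_of_le_ne_top bound_ne_top (hC r hr hr1))
  calc ν (closedEBall x r)
      = μ (C + closedBall x r) := by rw [closedEBall_coe]; rfl
    _ ≤ coveringNumber r C * μ (closedBall 0 (2 * r)) :=
        measure_add_closedBall_le μ covering_ne_top x
    _ ≤ K * r ^ (-β) * ((2 * r) ^ finrank ℝ V * unitMass) := by
        rw [Measure.addHaar_closedBall' μ 0 (by positivity), ENNReal.ofReal_pow (by positivity),
          ENNReal.ofReal_mul (by positivity), ENNReal.ofReal_coe_nnreal, ENNReal.ofReal_ofNat]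
        gcongr
        exact hC r hr hr1
    _ = K * 2 ^ finrank ℝ V * unitMass * r ^ (finrank ℝ V - β) := by
        rw [sub_eq_neg_add, ENNReal.rpow_add _ _ hr0 (by simp), ENNReal.rpow_natCast, mul_pow]
        ring

end Sumset

lemma coveringNumber_le_of_forall_pow {X : Type*} [PseudoEMetricSpace X] {C : Set X} {q : ℝ≥0}
    (hq0 : 0 < q) (hq1 : q < 1) {K : ℝ≥0∞} {β : ℝ} (hβ : 0 ≤ β)
    (hC : ∀ n : ℕ, (coveringNumber (q ^ n) C : ℝ≥0∞) ≤ K * ((q : ℝ≥0∞) ^ n) ^ (-β))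
    {r : ℝ≥0} (hr0 : 0 < r) (hr1 : r ≤ 1) :
    (coveringNumber r C : ℝ≥0∞) ≤ K * q ^ (-β) * r ^ (-β) := by
  obtain ⟨n, hnr, hrn⟩ := exists_nat_pow_near_of_lt_one hr0 hr1 hq0 hq1
  have hr_le_pow : (r : ℝ≥0∞) ≤ (q : ℝ≥0∞) ^ n := mod_cast hrn
  calc (coveringNumber r C : ℝ≥0∞)
      ≤ coveringNumber (q ^ (n + 1)) C := mod_cast coveringNumber_anti hnr.le
    _ ≤ K * ((q : ℝ≥0∞) ^ (n + 1)) ^ (-β) := hC (n + 1)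
    _ = K * q ^ (-β) * ((q : ℝ≥0∞) ^ n) ^ (-β) := by
        rw [pow_succ', ENNReal.mul_rpow_of_ne_top (by finiteness) (by finiteness), mul_assoc]
    _ ≤ K * q ^ (-β) * r ^ (-β) := by
        gcongr K * _ * ?_
        rw [ENNReal.rpow_neg, ENNReal.rpow_neg]
        gcongr

section RestrictedCantorSet

variable {A : Set ℕ}

/-- The real number with ternary digit `2` at the positions in `S` and `0` elsewhere. As in
`Real.ofDigits`, position `k` has weight `3⁻¹ ^ (k + 1)`. -/
noncomputable def cantorPoint (S : Set ℕ) : ℝ :=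
  Real.ofDigits (S.indicator fun _ ↦ (2 : Fin 3))

lemma cantorPoint_eq_tsum (S : Set ℕ) :
    cantorPoint S = ∑' k, S.indicator (fun _ ↦ (2 : ℝ)) k / 3 ^ (k + 1) := by
  refine tsum_congr fun k ↦ ?_
  by_cases hk : k ∈ S <;> simp [Real.ofDigitsTerm, hk, div_eq_mul_inv]

lemma cantorSetRestricted_eq_image_cantorPoint (A : Set ℕ) :
    cantorSetRestricted A = cantorPoint '' 𝒫 {k | k + 1 ∈ A} := by
  ext x
  constructor
  · rintro ⟨a, ha, haA, rfl⟩
    have ha_eq : a = {k | a k = 2}.indicator fun _ ↦ (2 : ℝ) := by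
      ext k
      obtain hk | hk := ha k <;> simp [hk]
    refine ⟨{k | a k = 2}, fun k hk ↦ haA k hk, ?_⟩
    rw [cantorPoint_eq_tsum, ← ha_eq]
  · rintro ⟨S, hS, rfl⟩
    refine ⟨S.indicator fun _ ↦ 2, fun k ↦ ?_, fun k hk ↦ hS ?_, cantorPoint_eq_tsum S⟩
    · by_cases hk : k ∈ S <;> simp [hk]
    · by_contra hkS
      simp [hkS] at hk

lemma abs_cantorPoint_sub_cantorPoint_inter_Iio_le (S : Set ℕ) (n : ℕ) :
    |cantorPoint S - cantorPoint (S ∩ Iio n)| ≤ ((3 : ℝ) ^ n)⁻¹ := by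
  refine Real.abs_ofDigits_sub_ofDigits_le fun i hi ↦ ?_
  by_cases hS : i ∈ S <;> simp [hS, hi]

lemma coveringNumber_cantorSetRestricted_le [DecidablePred (· ∈ A)] (n : ℕ) :
    coveringNumber (3⁻¹ ^ n) (cantorSetRestricted A) ≤
      (2 ^ #{k ∈ Finset.range n | k + 1 ∈ A} : ℕ) := by
  classical
  set positions := {k ∈ Finset.range n | k + 1 ∈ A}
  set centers := positions.powerset.image fun F : Finset ℕ ↦ cantorPoint F
  have centers_subset : (centers : Set ℝ) ⊆ cantorSetRestricted A := by
    intro x hx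
    obtain ⟨F, hF, rfl⟩ := Finset.mem_image.mp hx
    rw [cantorSetRestricted_eq_image_cantorPoint]
    exact mem_image_of_mem _ fun k hk ↦
      (Finset.mem_filter.mp (Finset.mem_powerset.mp hF hk)).2
  have centers_isCover : IsCover (3⁻¹ ^ n) (cantorSetRestricted A) centers := by
    rw [isCover_iff_subset_iUnion_closedBall, cantorSetRestricted_eq_image_cantorPoint]
    rintro _ ⟨S, hS, rfl⟩
    have truncation_mem : cantorPoint (S ∩ Iio n) ∈ centers := by
      refine Finset.mem_image.mpr ⟨{k ∈ Finset.range n | k ∈ S}, ?_, ?_⟩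
      · exact Finset.mem_powerset.mpr (Finset.monotone_filter_right _ fun k _ hk ↦ hS hk)
      · congr 1
        ext k
        simp [and_comm]
    refine mem_iUnion₂.mpr ⟨_, truncation_mem, ?_⟩
    simpa [Real.dist_eq] using abs_cantorPoint_sub_cantorPoint_inter_Iio_le S n
  calc coveringNumber (3⁻¹ ^ n) (cantorSetRestricted A)
      ≤ (centers : Set ℝ).encard := centers_isCover.coveringNumber_le_encard centers_subset
    _ ≤ (2 ^ #positions : ℕ) := by
        rw [encard_coe_eq_coe_finsetCard, ← Finset.card_powerset]
        exact mod_cast Finset.card_image_le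

lemma three_rpow_log_two_div_log_three : (3 : ℝ≥0∞) ^ (Real.log 2 / Real.log 3) = 2 := by
  rw [Real.log_div_log, ← ENNReal.ofReal_ofNat 3, ENNReal.ofReal_rpow_of_pos (by norm_num),
    Real.rpow_logb (by norm_num) (by norm_num) (by norm_num), ENNReal.ofReal_ofNat]

theorem ofReal_one_sub_le_dimH_of_cantorSetRestricted_add [DecidablePred (· ∈ A)] {D c : ℝ}
    (hD : 0 ≤ D) (hA : ∀ n : ℕ, (#{k ∈ Finset.range n | k + 1 ∈ A} : ℝ) ≤ D * n + c)
    {E : Set ℝ} (hE : volume (cantorSetRestricted A + E) ≠ 0) :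
    ENNReal.ofReal (1 - D * (Real.log 2 / Real.log 3)) ≤ dimH E := by
  set β := D * (Real.log 2 / Real.log 3) with hβ
  have three_pow_eq (n : ℕ) : (((3⁻¹ : ℝ≥0) : ℝ≥0∞) ^ n) ^ (-β) = 2 ^ (D * n) := by
    rw [ENNReal.coe_inv three_ne_zero, ENNReal.coe_ofNat, ← ENNReal.rpow_natCast,
      ← ENNReal.rpow_mul, ENNReal.inv_rpow, ← ENNReal.rpow_neg,
      ← three_rpow_log_two_div_log_three, ← ENNReal.rpow_mul]
    congr 1
    rw [hβ]
    ring
  have covering_le (n : ℕ) : (coveringNumber (3⁻¹ ^ n) (cantorSetRestricted A) : ℝ≥0∞) ≤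
      2 ^ c * (((3⁻¹ : ℝ≥0) : ℝ≥0∞) ^ n) ^ (-β) := by
    calc (coveringNumber (3⁻¹ ^ n) (cantorSetRestricted A) : ℝ≥0∞)
        ≤ 2 ^ (#{k ∈ Finset.range n | k + 1 ∈ A} : ℝ) := by
          rw [ENNReal.rpow_natCast]
          exact_mod_cast ENat.toENNReal_le.mpr (coveringNumber_cantorSetRestricted_le n)
      _ ≤ 2 ^ (c + D * n) :=
          ENNReal.rpow_le_rpow_of_exponent_le one_le_two (by linarith [hA n])
      _ = 2 ^ c * (((3⁻¹ : ℝ≥0) : ℝ≥0∞) ^ n) ^ (-β) := by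
          rw [ENNReal.rpow_add _ _ two_ne_zero (by simp), three_pow_eq]
  have hq : (3⁻¹ : ℝ≥0) < 1 := inv_lt_one_of_one_lt₀ (by norm_num)
  simpa using ofReal_finrank_sub_le_dimH_of_coveringNumber_le volume (by finiteness)
    (fun r ↦ coveringNumber_le_of_forall_pow (by positivity) hq (by positivity) covering_le) hE

end RestrictedCantorSet

/-- The set `{⌊y / D⌋ : y = 1, 2, …}`, which for `0 < D ≤ 1` has density `D`. -/
def floorQuotientSet (D : ℝ) : Set ℕ :=
  {m | ∃ y : ℕ, 0 < y ∧ (m : ℤ) = ⌊(y : ℝ) / D⌋}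

lemma card_filter_floorQuotientSet_le {D : ℝ} (hD : 0 < D)
    [DecidablePred (· ∈ floorQuotientSet D)] (n : ℕ) :
    (#{k ∈ Finset.range n | k + 1 ∈ floorQuotientSet D} : ℝ) ≤ D * n + D := by
  set positions := {k ∈ Finset.range n | k + 1 ∈ floorQuotientSet D}
  have positions_subset : positions ⊆
      (Finset.Icc 1 ⌊D * n + D⌋₊).image fun y : ℕ ↦ (⌊(y : ℝ) / D⌋ - 1).toNat := by
    intro k hk
    obtain ⟨hkn, y, hy, hky⟩ := Finset.mem_filter.mp hk
    have hk_le : (k : ℝ) + 1 ≤ n := mod_cast Finset.mem_range.mp hkn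
    have hy_lt : (y : ℝ) < ((k : ℝ) + 1 + 1) * D := by
      have := Int.lt_floor_add_one ((y : ℝ) / D)
      rw [← hky, div_lt_iff₀ hD] at this
      exact mod_cast this
    have hy_le : (y : ℝ) ≤ D * n + D := by nlinarith
    refine Finset.mem_image.mpr ⟨y, Finset.mem_Icc.mpr ⟨hy, Nat.le_floor hy_le⟩, ?_⟩
    simp [← hky]
  calc (#positions : ℝ) ≤ (⌊D * n + D⌋₊ : ℝ) := by
        simpa using (Finset.card_le_card positions_subset).trans Finset.card_image_le
    _ ≤ D * n + D := Nat.floor_le (by positivity)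

theorem dimH_ge_of_sumset_with_cantorSetRestricted_general (α : ℝ) (hα : α < 1)
    (D : ℝ) (hD : D = (1 - α) / (Real.log 2 / Real.log 3))
    (A : Set ℕ) (hA : A = {m : ℕ | ∃ y : ℕ, 0 < y ∧ (m : ℤ) = ⌊(y : ℝ) / D⌋})
    (E : Set ℝ) (hE : volume (cantorSetRestricted A + E) ≠ 0) :
    ENNReal.ofReal α ≤ dimH E := by
  classical
  have log_ratio_pos : 0 < Real.log 2 / Real.log 3 := by positivity
  have hD0 : 0 < D := hD ▸ div_pos (sub_pos.mpr hα) log_ratio_pos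
  have hα_eq : α = 1 - D * (Real.log 2 / Real.log 3) := by
    rw [hD, div_mul_cancel₀ _ log_ratio_pos.ne', sub_sub_cancel]
  obtain rfl : A = floorQuotientSet D := hA
  rw [hα_eq]
  exact ofReal_one_sub_le_dimH_of_cantorSetRestricted_add hD0.le
    (card_filter_floorQuotientSet_le hD0) hE

/-- Let `1 − log 2/log 3 ≤ α < 1`, `D = (1 − α)/(log 2/log 3)`, and
`A = {⌊y/D⌋ : y a positive integer}`.  Then every `E ⊆ ℝ` with
`𝒞_A + E ⊇ [0,2]` has `dim_H E ≥ α`. -/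
theorem dimH_ge_of_sumset_with_cantorSetRestricted (α : ℝ)
    (hα₁ : 1 - Real.log 2 / Real.log 3 ≤ α) (hα₂ : α < 1)
    (D : ℝ) (hD : D = (1 - α) / (Real.log 2 / Real.log 3))
    (A : Set ℕ) (hA : A = {m : ℕ | ∃ y : ℕ, 0 < y ∧ (m : ℤ) = ⌊(y : ℝ) / D⌋})
    (E : Set ℝ) (hE : Set.Icc (0 : ℝ) 2 ⊆ cantorSetRestricted A + E) :
    ENNReal.ofReal α ≤ dimH E := by
  refine dimH_ge_of_sumset_with_cantorSetRestricted_general α hα₂ D hD A hA E fun h ↦ ?_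
  simpa using measure_mono_null hE h
end
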